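/- arXiv:1310.6898 — 2 statements merged into one kernel-verified Lean document; each statement's English description precedes it below -/
import Mathlib

section
/- Let s > 0 and let (X, d_X) be a separable metric space that is σ-finite with respect to the Hausdorff measure H^s and that can be written as a countable union of compact sets together with an H^s-null set. Let (Y, d_Y) be a metric space of Hausdorff dimension t. If f : X → Y is a measurable surjection (with respect to H^s on X), then there exists a set N ⊆ X with H^s(N) = 0 and dim_H f(N) = t. -/
open MeasureTheory Set Filter Topology
open scoped NNReal ENNReal

universe u v

/-- A Hausdorff (gauge) function `h : [0,∞) → [0,∞]`: nondecreasing, right-continuous,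
and positive on positive arguments. -/
structure IsHausdorffFunction (h : ℝ≥0 → ℝ≥0∞) : Prop where
  mono : Monotone h
  right_continuous : ∀ t : ℝ≥0, ContinuousWithinAt h (Set.Ici t) t
  pos : ∀ t : ℝ≥0, 0 < t → 0 < h t

/-- `h` is of finite order: `limsup_{t→0+} h(3t)/h(t) < ∞`. -/
def FiniteOrder (h : ℝ≥0 → ℝ≥0∞) : Prop :=
  Filter.limsup (fun t : ℝ≥0 => h (3 * t) / h t) (nhdsWithin 0 (Set.Ioi 0)) < ⊤

/-- The Hausdorff (outer) measure built from the gauge `h`: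
`H^h(E) = sup_{δ>0} inf { Σ h(diam Uᵢ) : E ⊆ ⋃ Uᵢ, diam Uᵢ ≤ δ }`. -/
noncomputable def hausdorffM {Z : Type*} [EMetricSpace Z] (h : ℝ≥0 → ℝ≥0∞) :
    MeasureTheory.OuterMeasure Z :=
  MeasureTheory.OuterMeasure.mkMetric (fun d => h d.toNNReal)

/-- A set `S` is σ-finite with respect to an outer measure `μ` if it is a countable union
of Carathéodory-measurable sets of finite measure. -/
def SigmaFiniteSet {Z : Type*} (μ : MeasureTheory.OuterMeasure Z) (S : Set Z) : Prop :=
  ∃ A : ℕ → Set Z, (∀ n, μ.IsCaratheodory (A n) ∧ μ (A n) < ⊤) ∧ S = ⋃ n, A n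

/-- A metric space has finite structural dimension if for every `ξ > 0` there are `N` and
`δ₀ > 0` such that every set of diameter `δ ≤ δ₀` can be covered by `N` sets of diameter
at most `ξ·δ`. -/
def FiniteStructuralDim (Z : Type*) [EMetricSpace Z] : Prop :=
  ∀ ξ : ℝ≥0, 0 < ξ → ∃ (N : ℕ) (δ₀ : ℝ≥0), 0 < δ₀ ∧
    ∀ s : Set Z, EMetric.diam s ≤ δ₀ →
      ∃ U : Fin N → Set Z, s ⊆ ⋃ i, U i ∧ ∀ i, EMetric.diam (U i) ≤ ξ * EMetric.diam s

/-- Property (H) for a subspace `Y` of the complete separable metric space `Z`. -/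
structure PropertyH {Z : Type*} [MetricSpace Z] (Y : Set Z) (h : ℝ≥0 → ℝ≥0∞) : Prop where
  complete : CompleteSpace Z
  separable : TopologicalSpace.SeparableSpace Z
  analytic : MeasureTheory.AnalyticSet Y
  hausdorff : IsHausdorffFunction h
  cont : Continuous h
  zero : h 0 = 0
  alt : FiniteOrder h ∨ FiniteStructuralDim Z ∨ ∀ x y z : Z, dist x z ≤ max (dist x y) (dist y z)

/-- Property (H∞): property (H) together with non-σ-finiteness of `Y` w.r.t. `H^h`. -/
def PropertyHInf {Z : Type*} [MetricSpace Z] (Y : Set Z) (h : ℝ≥0 → ℝ≥0∞) : Prop :=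
  PropertyH Y h ∧ ¬ SigmaFiniteSet (hausdorffM h) Y

/-- Property (Aκ): `X` is a union of κ-many measurable sets of finite measure, and
κ-many null sets always union to a null set. -/
def PropertyA {X : Type u} (μ : MeasureTheory.OuterMeasure X) (κ : Cardinal.{u}) : Prop :=
  (∃ (ι : Type u) (A : ι → Set X), Cardinal.mk ι = κ ∧ (⋃ i, A i) = Set.univ ∧
      ∀ i, μ.IsCaratheodory (A i) ∧ μ (A i) < ⊤) ∧
  ∀ (ι : Type u) (A : ι → Set X), Cardinal.mk ι = κ → (∀ i, μ (A i) = 0) → μ (⋃ i, A i) = 0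

/-- A set is perfect if it is closed and every open set meeting it meets it in an
infinite set. -/
def PerfectSet {X : Type*} [TopologicalSpace X] (C : Set X) : Prop :=
  IsClosed C ∧ ∀ O : Set X, IsOpen O → (O ∩ C).Nonempty → (O ∩ C).Infinite

/-- The gauge `d ↦ d^s`. -/
noncomputable def sGauge (s : ℝ≥0) : ℝ≥0 → ℝ≥0∞ := fun d => (d : ℝ≥0∞) ^ (s : ℝ)

/-- Hausdorff–Besicovitch dimension: the supremum of all `s ≥ 0` with `H^{d^s}(E) > 0`. -/
noncomputable def hDim {Z : Type*} [EMetricSpace Z] (E : Set Z) : ℝ≥0∞ :=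
  ⨆ (s : ℝ≥0) (_ : 0 < hausdorffM (sGauge s) E), (s : ℝ≥0∞)


/-- total weight -/
noncomputable def frW {K : Type*} (d : ℝ) (c : (K × Ioi (0:ℝ)) →₀ ℝ) : ℝ :=
  c.sum fun b a => a * (b.2 : ℝ) ^ d

/-- covering function -/
noncomputable def frF {K : Type*} [MetricSpace K] (c : (K × Ioi (0:ℝ)) →₀ ℝ) (x : K) : ℝ :=
  c.sum fun b a => a * (Metric.ball b.1 (b.2:ℝ)).indicator (fun _ => (1:ℝ)) x

theorem frW_add {K : Type*} (d : ℝ) (c c' : (K × Ioi (0:ℝ)) →₀ ℝ) :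
    frW d (c + c') = frW d c + frW d c' := by
  unfold frW
  exact Finsupp.sum_add_index' (by simp) (by intros; ring)

theorem frF_add {K : Type*} [MetricSpace K] (c c' : (K × Ioi (0:ℝ)) →₀ ℝ) (x : K) :
    frF (c + c') x = frF c x + frF c' x := by
  unfold frF
  exact Finsupp.sum_add_index' (by simp) (by intros; ring)

theorem frW_smul {K : Type*} (d : ℝ) (a : ℝ) (c : (K × Ioi (0:ℝ)) →₀ ℝ) :
    frW d (a • c) = a * frW d c := by
  unfold frW
  rw [Finsupp.sum_smul_index' (by simp), Finsupp.mul_sum]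
  simp [mul_assoc]

theorem frF_smul {K : Type*} [MetricSpace K] (a : ℝ) (c : (K × Ioi (0:ℝ)) →₀ ℝ) (x : K) :
    frF (a • c) x = a * frF c x := by
  unfold frF
  rw [Finsupp.sum_smul_index' (by simp), Finsupp.mul_sum]
  simp [mul_assoc]

theorem frW_nonneg {K : Type*} (d : ℝ) (c : (K × Ioi (0:ℝ)) →₀ ℝ) (hc : 0 ≤ c) : 0 ≤ frW d c :=
  Finset.sum_nonneg fun b _ => mul_nonneg (hc b) (Real.rpow_nonneg b.2.2.le _)

/-- the main combinatorial lemma -/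
theorem fr_comb {K : Type*} [MetricSpace K] [Nonempty K] (d A : ℝ)
    (hA : ∀ s : Finset (K × Ioi (0:ℝ)), (∀ x, ∃ b ∈ s, x ∈ Metric.closedBall b.1 (5 * (b.2:ℝ))) →
      A ≤ ∑ b ∈ s, (b.2 : ℝ) ^ d) (n : ℕ) :
    ∀ (c : (K × Ioi (0:ℝ)) →₀ ℝ), 0 ≤ c → c.support.card ≤ n → ∀ a : ℝ, 0 ≤ a →
      (∀ x, a ≤ frF c x) → a * A ≤ frW d c := by
  classical
  induction n with
  | zero =>
    intro c hc hcard a ha h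
    have : c = 0 := by simpa using hcard
    subst this
    have := h (Classical.arbitrary K)
    simp [frF] at this
    have : a = 0 := le_antisymm this ha
    simp [this, frW]
  | succ n ih =>
    intro c hc hcard a ha h
    rcases ha.eq_or_lt with rfl | ha'
    · simpa using frW_nonneg d c hc
    obtain ⟨R, hR⟩ : ∃ R : ℝ, ∀ b ∈ (c.support : Set (K × Ioi (0:ℝ))), (b.2:ℝ) ≤ R := by
      obtain ⟨R, hR⟩ := (c.support.image fun b => (b.2:ℝ)).bddAbove
      exact ⟨R, fun b hb => hR (Finset.mem_coe.2 (Finset.mem_image_of_mem (fun b : K × Ioi (0:ℝ) => (b.2:ℝ)) hb))⟩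
    obtain ⟨u, hu, hdisj, hcov⟩ := Vitali.exists_disjoint_subfamily_covering_enlargement_closedBall
      (c.support : Set (K × Ioi (0:ℝ))) (fun b => b.1) (fun b => (b.2:ℝ)) R hR 5 (by norm_num)
    obtain ⟨S, rfl⟩ := (c.support.finite_toSet.subset hu).exists_finset_coe
    have hSsub : S ⊆ c.support := by exact_mod_cast hu
    have hScov : ∀ x, ∃ b ∈ S, x ∈ Metric.closedBall b.1 (5 * (b.2:ℝ)) := by
      intro x
      have h1 : 0 < frF c x := ha'.trans_le (h x)
      obtain ⟨b, hb, hb2⟩ := Finset.exists_ne_zero_of_sum_ne_zero h1.ne'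
      have hx : x ∈ Metric.ball b.1 (b.2:ℝ) := by
        by_contra hx
        simp [hx] at hb2
      obtain ⟨b', hb', hs⟩ := hcov b (by simpa using hb)
      exact ⟨b', by simpa using hb', hs (Metric.ball_subset_closedBall hx)⟩
    have hSA := hA S hScov
    have hSne : S.Nonempty := by
      obtain ⟨b, hb, _⟩ := hScov (Classical.arbitrary K); exact ⟨b, hb⟩
    obtain ⟨b0, hb0, hmin⟩ := S.exists_min_image c hSne
    -- the function subtracting g on S
    have hind : ∀ x, ∑ b ∈ S, (Metric.ball b.1 (b.2:ℝ)).indicator (fun _ => (1:ℝ)) x ≤ 1 := by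
      intro x
      by_cases hx : ∃ b ∈ S, x ∈ Metric.ball b.1 (b.2:ℝ)
      · obtain ⟨b, hb, hxb⟩ := hx
        rw [Finset.sum_eq_single_of_mem b hb]
        · simp [hxb]
        · intro b' hb' hne
          have := hdisj (by simpa using hb') (by simpa using hb) hne
          apply indicator_of_notMem
          intro hx'
          exact Set.disjoint_left.1 this (Metric.ball_subset_closedBall hx')
            (Metric.ball_subset_closedBall hxb)
      · push Not at hx
        rw [Finset.sum_eq_zero]
        · norm_num
        · intro b hb; exact indicator_of_notMem (hx b hb) _
    let e : (K × Ioi (0:ℝ)) →₀ ℝ := Finsupp.indicator S fun _ _ => 1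
    have heW : frW d e = ∑ b ∈ S, (b.2 : ℝ) ^ d := by
      unfold frW
      rw [Finsupp.sum_of_support_subset (s := S) e (Finsupp.support_indicator_subset _ _) _ (by simp)]
      exact Finset.sum_congr rfl fun b hb => by simp [e, Finsupp.indicator_of_mem hb]
    have heF : ∀ x, frF e x ≤ 1 := by
      intro x
      unfold frF
      rw [Finsupp.sum_of_support_subset (s := S) e (Finsupp.support_indicator_subset _ _) _ (by simp)]
      refine le_of_eq_of_le (Finset.sum_congr rfl fun b hb => ?_) (hind x)
      simp [e, Finsupp.indicator_of_mem hb]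
    have hsub : ∀ g : ℝ, g ≤ c b0 → 0 ≤ c + (-g) • e := by
      intro g hg b
      by_cases hb : b ∈ S
      · simp only [Finsupp.coe_zero, Pi.zero_apply, Finsupp.add_apply, Finsupp.smul_apply, e,
          Finsupp.indicator_of_mem hb, smul_eq_mul]
        linarith [hmin b hb]
      · simp only [Finsupp.coe_zero, Pi.zero_apply, Finsupp.add_apply, Finsupp.smul_apply, e,
          Finsupp.indicator_of_notMem hb, smul_eq_mul]
        simpa using hc b
    by_cases hga : a ≤ c b0
    · have h1 := frW_nonneg d _ (hsub a hga)
      rw [frW_add, frW_smul, heW] at h1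
      nlinarith
    · push Not at hga
      have hcard' : (c + (-(c b0)) • e).support.card ≤ n := by
        have : (c + (-(c b0)) • e).support ⊆ c.support.erase b0 := by
          intro b hb
          rw [Finsupp.mem_support_iff] at hb
          rw [Finset.mem_erase]
          constructor
          · rintro rfl
            apply hb
            simp [e, Finsupp.indicator_of_mem hb0]
          · by_contra hbc
            apply hb
            have : b ∉ S := fun h => hbc (hSsub h)
            simp only [Finsupp.add_apply, Finsupp.smul_apply, e,
              Finsupp.indicator_of_notMem this, smul_eq_mul]
            simpa using hbc
        have h2 := Finset.card_le_card this
        rw [Finset.card_erase_of_mem (hSsub hb0)] at h2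
        omega
      have h3 := ih _ (hsub _ le_rfl) hcard' (a - c b0) (by linarith) (by
        intro x
        rw [frF_add, frF_smul]
        have : 0 ≤ c b0 := hc b0
        nlinarith [h x, heF x])
      rw [frW_add, frW_smul, heW] at h3
      have : 0 ≤ c b0 := hc b0
      nlinarith

/-- positivity of the covering number -/
theorem fr_content {K : Type*} [MetricSpace K] [MeasurableSpace K] [BorelSpace K]
    (d : ℝ) (hd : 0 < d) (hK : 0 < μH[d] (univ : Set K)) :
    ∃ A : ℝ, 0 < A ∧ ∀ s : Finset (K × Ioi (0:ℝ)),
      (∀ x, ∃ b ∈ s, x ∈ Metric.closedBall b.1 (5 * (b.2:ℝ))) → A ≤ ∑ b ∈ s, (b.2 : ℝ) ^ d := by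
  by_contra! hcon
  have hpos : ∀ n : ℕ, (0:ℝ) < (((n:ℝ) + 1)⁻¹) ^ d := fun n => by positivity
  choose s hs hlt using fun n : ℕ => hcon _ (hpos n)
  have hsmall : ∀ n : ℕ, ∀ b ∈ s n, (b.2:ℝ) ≤ ((n:ℝ)+1)⁻¹ := by
    intro n b hb
    have h1 : (b.2:ℝ) ^ d ≤ ∑ b ∈ s n, (b.2:ℝ)^d :=
      Finset.single_le_sum (f := fun b : K × Ioi (0:ℝ) => (b.2:ℝ)^d)
        (fun b _ => Real.rpow_nonneg b.2.2.le _) hb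
    have h2 := h1.trans (hlt n).le
    exact (Real.rpow_le_rpow_iff b.2.2.le (by positivity) hd).1 h2
  have hT : Tendsto (fun n : ℕ => ((n:ℝ)+1)⁻¹) atTop (𝓝 0) := by
    simpa using tendsto_one_div_add_atTop_nhds_zero_nat (𝕜 := ℝ)
  have hdiam : ∀ b : K × Ioi (0:ℝ), Metric.ediam (Metric.closedBall b.1 (5 * (b.2:ℝ))) ≤
      ENNReal.ofReal (10 * (b.2:ℝ)) := by
    intro b
    apply Metric.ediam_le
    intro x hx y hy
    rw [edist_dist]
    apply ENNReal.ofReal_le_ofReal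
    have := dist_triangle_right x y b.1
    rw [Metric.mem_closedBall] at hx hy
    linarith
  have key := Measure.hausdorffMeasure_le_liminf_sum (ι := fun n => s n) d (univ : Set K) (l := atTop)
    (fun n : ℕ => ENNReal.ofReal (10 * ((n:ℝ)+1)⁻¹))
    (by
      have := ENNReal.tendsto_ofReal (hT.const_mul 10)
      simpa using this)
    (fun n b => Metric.closedBall b.1.1 (5 * (b.1.2:ℝ)))
    (Eventually.of_forall fun n b => (hdiam b.1).trans
      (ENNReal.ofReal_le_ofReal (by linarith [hsmall n b.1 b.2])))
    (Eventually.of_forall fun n x _ => by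
      obtain ⟨b, hb, hx⟩ := hs n x
      exact mem_iUnion.2 ⟨⟨b, hb⟩, hx⟩)
  have hle : ∀ n : ℕ, (∑ i : s n, Metric.ediam (Metric.closedBall i.1.1 (5 * (i.1.2:ℝ))) ^ d) ≤
      ENNReal.ofReal (10 ^ d * (((n:ℝ) + 1)⁻¹) ^ d) := by
    intro n
    calc _ ≤ ∑ i : s n, ENNReal.ofReal (10 ^ d * (i.1.2:ℝ) ^ d) := by
          refine Finset.sum_le_sum fun i _ => ?_
          refine (ENNReal.rpow_le_rpow (hdiam i.1) hd.le).trans_eq ?_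
          have h2 : (0:ℝ) < i.1.2 := i.1.2.2
          rw [ENNReal.ofReal_rpow_of_pos (by positivity), Real.mul_rpow (by norm_num) h2.le]
      _ = ENNReal.ofReal (∑ i : s n, 10 ^ d * (i.1.2:ℝ) ^ d) := by
          rw [ENNReal.ofReal_sum_of_nonneg]
          intro i _
          have h2 : (0:ℝ) < i.1.2 := i.1.2.2
          positivity
      _ ≤ _ := by
          apply ENNReal.ofReal_le_ofReal
          rw [← Finset.mul_sum]
          apply mul_le_mul_of_nonneg_left _ (by positivity)
          rw [Finset.sum_coe_sort (s n) (fun b => (b.2:ℝ)^d)]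
          exact (hlt n).le
  have hlim : Tendsto (fun n : ℕ => ENNReal.ofReal (10 ^ d * (((n:ℝ) + 1)⁻¹) ^ d)) atTop (𝓝 0) := by
    have h1 := (hT.rpow_const (p := d) (Or.inr hd.le)).const_mul (10 ^ d)
    rw [Real.zero_rpow hd.ne', mul_zero] at h1
    simpa using ENNReal.tendsto_ofReal h1
  have := key.trans (liminf_le_liminf (Eventually.of_forall hle))
  rw [hlim.liminf_eq] at this
  exact absurd hK (not_lt.2 this)

/-- the sublinear functional -/
noncomputable def frP {K : Type*} [MetricSpace K] (d : ℝ) (f : K → ℝ) : ℝ :=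
  sInf {v | ∃ c : (K × Ioi (0:ℝ)) →₀ ℝ, 0 ≤ c ∧ (∀ x, f x ≤ frF c x) ∧ v = frW d c}

theorem frP_le {K : Type*} [MetricSpace K] (d : ℝ) (f : K → ℝ) (c : (K × Ioi (0:ℝ)) →₀ ℝ)
    (hc : 0 ≤ c) (h : ∀ x, f x ≤ frF c x) : frP d f ≤ frW d c :=
  csInf_le ⟨0, by rintro _ ⟨c, hc, _, rfl⟩; exact frW_nonneg d c hc⟩ ⟨c, hc, h, rfl⟩

theorem frF_single {K : Type*} [MetricSpace K] (b : K × Ioi (0:ℝ)) (a : ℝ) (x : K) :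
    frF (Finsupp.single b a) x = a * (Metric.ball b.1 (b.2:ℝ)).indicator (fun _ => (1:ℝ)) x := by
  unfold frF; rw [Finsupp.sum_single_index]; simp

theorem frW_single {K : Type*} (d : ℝ) (b : K × Ioi (0:ℝ)) (a : ℝ) :
    frW d (Finsupp.single b a) = a * (b.2:ℝ) ^ d := by
  unfold frW; rw [Finsupp.sum_single_index]; simp

theorem frP_nonempty {K : Type*} [MetricSpace K] [CompactSpace K] [Nonempty K] (d : ℝ) (f : K → ℝ)
    (hf : Continuous f) :
    {v | ∃ c : (K × Ioi (0:ℝ)) →₀ ℝ, 0 ≤ c ∧ (∀ x, f x ≤ frF c x) ∧ v = frW d c}.Nonempty := by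
  obtain ⟨M, hM⟩ := (isCompact_range hf).bddAbove
  let x0 := Classical.arbitrary K
  obtain ⟨R, hR0, hR⟩ := (isCompact_univ (X := K)).isBounded.subset_ball_lt 0 x0
  refine ⟨_, Finsupp.single (x0, ⟨R, hR0⟩) (max M 0), ?_, ?_, rfl⟩
  · simp
  · intro x
    rw [frF_single]
    have : x ∈ Metric.ball x0 R := hR (mem_univ x)
    simp only [indicator_of_mem this, mul_one]
    exact (hM (mem_range_self x)).trans (le_max_left _ _)

theorem le_frP {K : Type*} [MetricSpace K] [CompactSpace K] [Nonempty K] (d : ℝ) (f : K → ℝ)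
    (hf : Continuous f) (v : ℝ)
    (h : ∀ c : (K × Ioi (0:ℝ)) →₀ ℝ, 0 ≤ c → (∀ x, f x ≤ frF c x) → v ≤ frW d c) : v ≤ frP d f :=
  le_csInf (frP_nonempty d f hf) (by rintro _ ⟨c, hc, hx, rfl⟩; exact h c hc hx)

theorem frP_smul_le {K : Type*} [MetricSpace K] [CompactSpace K] [Nonempty K] (d : ℝ) (f : K → ℝ)
    (hf : Continuous f) (a : ℝ) (ha : 0 < a) : frP d (fun x => a * f x) ≤ a * frP d f := by
  rw [← div_le_iff₀' ha]
  apply le_frP d f hf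
  intro c hc hx
  rw [div_le_iff₀' ha, ← frW_smul]
  apply frP_le
  · exact smul_nonneg ha.le hc
  · intro x
    rw [frF_smul]
    exact mul_le_mul_of_nonneg_left (hx x) ha.le

theorem frostman {K : Type*} [MetricSpace K] [CompactSpace K] [MeasurableSpace K] [BorelSpace K]
    (d : ℝ) (hd : 0 < d) (hK : 0 < μH[d] (univ : Set K)) :
    ∃ μ : Measure K, IsFiniteMeasure μ ∧ 0 < μ univ ∧
      ∀ x ρ, 0 < ρ → μ (Metric.ball x ρ) ≤ ENNReal.ofReal (ρ ^ d) := by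
  have hne : Nonempty K := by
    by_contra h
    rw [not_nonempty_iff] at h
    simp [Set.univ_eq_empty_iff.2 h] at hK
  obtain ⟨A, hA, hcov⟩ := fr_content d hd hK
  let N : CompactlySupportedContinuousMap K ℝ → ℝ := fun f => frP d f
  have N_nonneg : ∀ f : CompactlySupportedContinuousMap K ℝ, 0 ≤ N f := fun f =>
    le_frP d f f.continuous 0 fun c hc _ => frW_nonneg d c hc
  have N_hom : ∀ a : ℝ, 0 < a → ∀ f : CompactlySupportedContinuousMap K ℝ, N (a • f) = a * N f := by
    intro a ha f
    apply le_antisymm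
    · exact frP_smul_le d f f.continuous a ha
    · have h1 := frP_smul_le d (a • f : CompactlySupportedContinuousMap K ℝ) (a • f : CompactlySupportedContinuousMap K ℝ).continuous a⁻¹ (inv_pos.2 ha)
      have h2 : (fun x => a⁻¹ * (a • f : CompactlySupportedContinuousMap K ℝ) x) = f := by
        ext x; simp [ha.ne']
      rw [h2, le_inv_mul_iff₀ ha] at h1
      exact h1
  have N_add : ∀ f g : CompactlySupportedContinuousMap K ℝ, N (f + g) ≤ N f + N g := by
    intro f g
    rw [← sub_le_iff_le_add]
    apply le_frP d f f.continuous
    intro c hc hx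
    rw [sub_le_comm]
    apply le_frP d g g.continuous
    intro c' hc' hx'
    rw [sub_le_iff_le_add', ← frW_add]
    apply frP_le
    · exact add_nonneg hc hc'
    · intro x
      rw [frF_add]
      exact add_le_add (hx x) (hx' x)
  have N_nonpos : ∀ f : CompactlySupportedContinuousMap K ℝ, f ≤ 0 → N f ≤ 0 := by
    intro f hf
    have := frP_le d f 0 le_rfl (fun x => by simpa [frF] using hf x)
    simpa [frW] using this
  let one : CompactlySupportedContinuousMap K ℝ := ⟨ContinuousMap.const K 1, HasCompactSupport.of_compactSpace _⟩
  have hone : ∀ x, one x = 1 := fun x => rfl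
  have hone0 : one ≠ 0 := by
    intro h
    have := hone (Classical.arbitrary K)
    rw [h] at this
    simp at this
  have hNone : A ≤ N one := by
    apply le_frP d one one.continuous
    intro c hc hx
    simpa using fr_comb d A hcov _ c hc le_rfl 1 zero_le_one hx
  obtain ⟨g, hg1, hg2⟩ := exists_extension_of_le_sublinear
    (LinearPMap.mkSpanSingleton (K := ℝ) one (N one) hone0) N N_hom N_add (by
      rintro ⟨x, hx⟩
      obtain ⟨a, rfl⟩ := Submodule.mem_span_singleton.1 hx
      rw [LinearPMap.mkSpanSingleton'_apply]
      rcases lt_or_ge 0 a with h | h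
      · simp [N_hom a h]
      · exact le_trans (by simpa using mul_nonpos_of_nonpos_of_nonneg h (N_nonneg one)) (N_nonneg _))
  have hgone : g one = N one := by
    have := hg1 ⟨one, Submodule.mem_span_singleton_self one⟩
    rw [LinearPMap.mkSpanSingleton_apply] at this
    exact this
  have hgpos : ∀ f : CompactlySupportedContinuousMap K ℝ, 0 ≤ f → 0 ≤ g f := by
    intro f hf
    have := (hg2 (-f)).trans (N_nonpos (-f) (by simpa using hf))
    simpa using this
  let Λ : CompactlySupportedContinuousMap K ℝ →ₚ[ℝ] ℝ := PositiveLinearMap.mk₀ g hgpos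
  have hΛ : ∀ f, Λ f = g f := fun f => rfl
  have huniv : RealRMK.rieszMeasure Λ univ ≤ ENNReal.ofReal (Λ one) :=
    RealRMK.rieszMeasure_le_of_eq_one Λ (fun x => by simp [hone]) isCompact_univ (fun x _ => hone x)
  refine ⟨RealRMK.rieszMeasure Λ, ⟨huniv.trans_lt ENNReal.ofReal_lt_top⟩, ?_, ?_⟩
  · have := RealRMK.le_rieszMeasure_tsupport_subset Λ (f := one) (fun x => by simp [hone])
      (V := univ) (subset_univ _)
    refine lt_of_lt_of_le ?_ this
    rw [ENNReal.ofReal_pos, hΛ, hgone]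
    linarith
  · intro x ρ hρ
    have hreg : (RealRMK.rieszMeasure Λ).Regular := inferInstance
    rw [Metric.isOpen_ball.measure_eq_iSup_isCompact]
    refine iSup₂_le fun k hk => iSup_le fun hkc => ?_
    obtain ⟨φ, h1, h2, h3, h4⟩ := exists_continuous_one_zero_of_isCompact hkc
      (Metric.isOpen_ball (x := x) (ε := ρ)).isClosed_compl
      (Set.disjoint_left.2 fun y hy hy' => hy' (hk hy))
    let φ' : CompactlySupportedContinuousMap K ℝ := ⟨φ, HasCompactSupport.of_compactSpace _⟩
    refine (RealRMK.rieszMeasure_le_of_eq_one Λ (f := φ') (fun x => (h4 x).1) hkc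
      (fun x hx => h1 hx)).trans (ENNReal.ofReal_le_ofReal ?_)
    rw [hΛ]
    refine (hg2 φ').trans ?_
    have := frP_le d φ' (Finsupp.single (x, ⟨ρ, hρ⟩) 1) (by simp) (by
      intro y
      rw [frF_single]
      by_cases hy : y ∈ Metric.ball x ρ
      · rw [indicator_of_mem hy, mul_one]; exact (h4 y).2
      · have : φ' y = 0 := h2 hy
        simp [hy, this])
    simpa [frW_single] using this

theorem halving {K : Type*} [MeasurableSpace K] [StandardBorelSpace K] (μ : Measure K)
    [IsFiniteMeasure μ] [NullSingletonClass μ] (S : Set K) (hS : MeasurableSet S) :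
    ∃ A, A ⊆ S ∧ MeasurableSet A ∧ 2 * μ A = μ S := by
  by_cases h0 : μ S = 0
  · exact ⟨∅, empty_subset _, MeasurableSet.empty, by simp [h0]⟩
  let g := MeasureTheory.embeddingReal K
  have hg : MeasurableEmbedding g := measurableEmbedding_embeddingReal K
  let ρ : Measure ℝ := (μ.restrict S).map g
  have hna : NullSingletonClass ρ := ⟨fun y => by
    rw [hg.map_apply]
    exact ((Set.subsingleton_singleton (a := y)).preimage hg.injective).measure_zero _⟩
  have huniv : ρ univ = μ S := by
    simp [ρ, hg.map_apply]
  have hcont : Continuous fun t => ρ.real (Iic t) := by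
    have h1 := intervalIntegral.continuous_primitive (μ := ρ) (f := fun _ => (1:ℝ))
      (fun a b => intervalIntegrable_const) 0
    have h2 : (fun t => ρ.real (Iic t)) = fun t => ρ.real (Iic 0) + ∫ x in (0:ℝ)..t, (1:ℝ) ∂ρ := by
      ext t
      rw [← intervalIntegral.integral_Iic_sub_Iic (by simp) (by simp)]
      simp [Measure.real]
    rw [h2]
    exact continuous_const.add h1
  have hpos : 0 < ρ.real univ := by
    rw [Measure.real, huniv]
    exact ENNReal.toReal_pos h0 (measure_ne_top _ _)
  have hbot : Tendsto (fun t => ρ.real (Iic t)) atBot (𝓝 0) := by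
    have h1 := (ENNReal.tendsto_toReal (measure_ne_top ρ univ)).comp (tendsto_measure_Ici_atBot ρ)
    have h2 : (fun t => ρ.real (Iic t)) = fun t => ρ.real univ - ρ.real (Ici t) := by
      ext t
      rw [← compl_Ioi, measureReal_compl measurableSet_Ioi, measureReal_congr Ioi_ae_eq_Ici]
    rw [h2]
    simpa [Measure.real] using (tendsto_const_nhds (x := ρ.real univ)).sub h1
  have htop : Tendsto (fun t => ρ.real (Iic t)) atTop (𝓝 (ρ.real univ)) := 
    (ENNReal.tendsto_toReal (measure_ne_top _ _)).comp (tendsto_measure_Iic_atTop ρ)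
  obtain ⟨t, ht⟩ := mem_range_of_exists_le_of_exists_ge (c := ρ.real univ / 2) hcont
    ((hbot.eventually_le_const (u := ρ.real univ / 2) (by linarith)).exists)
    ((htop.eventually_const_le (u := ρ.real univ / 2) (by linarith)).exists)
  have hm : MeasurableSet (g ⁻¹' Iic t) := hg.measurable measurableSet_Iic
  refine ⟨g ⁻¹' Iic t ∩ S, inter_subset_right, hm.inter hS, ?_⟩
  have h3 : ρ (Iic t) = μ (g ⁻¹' Iic t ∩ S) := by
    rw [hg.map_apply, Measure.restrict_apply hm]
  have h4 : ρ.real (Iic t) = ρ.real univ / 2 := ht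
  rw [← h3, ← huniv, ← ENNReal.toReal_eq_toReal_iff' (by finiteness) (by finiteness)]
  simp only [Measure.real] at h4
  rw [ENNReal.toReal_mul, h4]
  rw [ENNReal.toReal_ofNat]; ring

theorem fr_step {K : Type*} [MetricSpace K] [CompactSpace K] [MeasurableSpace K] [BorelSpace K]
    (μ ν : Measure K) [IsFiniteMeasure μ] [IsFiniteMeasure ν] [NullSingletonClass μ] (B : Set K)
    (hB : IsCompact B) (ψ : K → ℕ) (hψ : Measurable ψ) (η : ℝ≥0∞) (hη : η ≠ 0) :
    ∃ B', B' ⊆ B ∧ IsCompact B' ∧ 2 * ν B' ≤ ν B ∧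
      (∀ T : Set ℕ, 2 * μ (B' ∩ ψ ⁻¹' T) ≤ μ (B ∩ ψ ⁻¹' T)) ∧ μ B ≤ 2 * μ B' + η := by
  have hSm : ∀ n, MeasurableSet (B ∩ ψ ⁻¹' {n}) := fun n =>
    hB.measurableSet.inter (hψ (measurableSet_singleton n))
  have h1 : ∀ n, ∃ A, A ⊆ B ∩ ψ ⁻¹' {n} ∧ MeasurableSet A ∧ 2 * μ A = μ (B ∩ ψ ⁻¹' {n}) ∧
      2 * ν A ≤ ν (B ∩ ψ ⁻¹' {n}) := by
    intro n
    obtain ⟨A, hAS, hA, hAμ⟩ := halving μ _ (hSm n)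
    have hadd := measure_inter_add_sdiff (μ := ν) (B ∩ ψ ⁻¹' {n}) hA
    have hadd' := measure_inter_add_sdiff (μ := μ) (B ∩ ψ ⁻¹' {n}) hA
    rw [inter_eq_self_of_subset_right hAS] at hadd hadd'
    rcases le_total (ν A) (ν ((B ∩ ψ ⁻¹' {n}) \ A)) with h | h
    · refine ⟨A, hAS, hA, hAμ, ?_⟩
      rw [← hadd, two_mul]
      gcongr
    · refine ⟨(B ∩ ψ ⁻¹' {n}) \ A, sdiff_subset, (hSm n).diff hA, ?_, ?_⟩
      · have : μ ((B ∩ ψ ⁻¹' {n}) \ A) = μ A := by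
          rw [← hAμ, two_mul] at hadd'
          exact (ENNReal.add_right_inj (measure_ne_top _ _)).1 hadd'
        rw [this, hAμ]
      · conv_rhs => rw [← hadd]
        rw [two_mul]
        gcongr
  choose A hAS hA hAμ hAν using h1
  have hdS : Pairwise (Function.onFun Disjoint fun n => B ∩ ψ ⁻¹' {n}) := by
    intro m n hmn
    refine Set.disjoint_left.2 ?_
    rintro x ⟨_, hx⟩ ⟨_, hx'⟩
    exact hmn (hx.symm.trans hx')
  have hdA : Pairwise (Function.onFun Disjoint A) := fun m n hmn =>
    (hdS hmn).mono (hAS m) (hAS n)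
  have hBT : ∀ T : Set ℕ, B ∩ ψ ⁻¹' T = ⋃ n ∈ T, (B ∩ ψ ⁻¹' {n}) := by
    intro T; ext x; simp
  have hAT : ∀ T : Set ℕ, (⋃ n, A n) ∩ ψ ⁻¹' T = ⋃ n ∈ T, A n := by
    intro T; ext x
    simp only [mem_inter_iff, mem_iUnion, mem_preimage, exists_prop]
    constructor
    · rintro ⟨⟨n, hn⟩, hx⟩
      have : ψ x = n := (hAS n hn).2
      exact ⟨n, this ▸ hx, hn⟩
    · rintro ⟨n, hn, hx⟩
      have : ψ x = n := (hAS n hx).2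
      exact ⟨⟨n, hx⟩, this ▸ hn⟩
  have hμT : ∀ T : Set ℕ, 2 * μ ((⋃ n, A n) ∩ ψ ⁻¹' T) = μ (B ∩ ψ ⁻¹' T) := by
    intro T
    rw [hBT, hAT, measure_biUnion T.to_countable (fun m _ n _ h => hdA h) (fun n _ => hA n),
      measure_biUnion T.to_countable (fun m _ n _ h => hdS h) (fun n _ => hSm n),
      ← ENNReal.tsum_mul_left]
    exact tsum_congr fun n => hAμ n
  have hν : 2 * ν (⋃ n, A n) ≤ ν B := by
    have : B = ⋃ n, (B ∩ ψ ⁻¹' {n}) := by ext x; simp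
    rw [this, measure_iUnion hdA hA, measure_iUnion hdS hSm, ← ENNReal.tsum_mul_left]
    exact ENNReal.tsum_le_tsum hAν
  have hμu : 2 * μ (⋃ n, A n) = μ B := by simpa using hμT univ
  have hη2 : η / 2 ≠ 0 := by simp [hη]
  obtain ⟨C, hCA, hC, hlt⟩ := (MeasurableSet.iUnion hA).exists_isCompact_lt_add
    (measure_ne_top μ _) hη2
  refine ⟨C, hCA.trans (iUnion_subset fun n => (hAS n).trans inter_subset_left), hC, ?_, ?_, ?_⟩
  · exact le_trans (by gcongr) hν
  · intro T
    rw [← hμT]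
    gcongr
  · rw [← hμu]
    calc 2 * μ (⋃ n, A n) ≤ 2 * (μ C + η / 2) := by gcongr
      _ = 2 * μ C + η := by
        rw [mul_add, ENNReal.mul_div_cancel (by simp) (by simp)]

theorem fr_partition {K : Type*} [MetricSpace K] [CompactSpace K] [MeasurableSpace K] [BorelSpace K]
    (δ : ℝ) (hδ : 0 < δ) : ∃ φ : K → ℕ, Measurable φ ∧ ∀ x y, φ x = φ y → dist x y < δ := by
  classical
  rcases isEmpty_or_nonempty K with h | h
  · exact ⟨fun _ => 0, measurable_const, fun x => (IsEmpty.false x).elim⟩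
  let u := TopologicalSpace.denseSeq K
  have hp : ∀ x : K, ∃ n, dist x (u n) < δ / 2 := fun x =>
    (TopologicalSpace.denseRange_denseSeq K).exists_dist_lt x (by linarith)
  refine ⟨fun x => Nat.find (hp x), measurable_find hp fun k => ?_, ?_⟩
  · exact (isOpen_lt (by fun_prop) (by fun_prop)).measurableSet
  · intro x y hxy
    have h1 := Nat.find_spec (hp x)
    have h2 := Nat.find_spec (hp y)
    simp only at hxy
    rw [← hxy] at h2
    have := dist_triangle_right x y (u (Nat.find (hp x)))
    linarith

theorem fr_cover {K : Type*} [MetricSpace K] [Nonempty K] [MeasurableSpace K] [BorelSpace K]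
    (r : ℝ) (hr : 0 < r) (S : Set K) (hS : μH[r] S = 0) (ε : ℝ≥0∞) (hε : ε ≠ 0) :
    ∃ (x : ℕ → K) (ρ : ℕ → ℝ), (∀ i, 0 < ρ i ∧ ρ i ≤ 1) ∧ S ⊆ ⋃ i, Metric.ball (x i) (ρ i) ∧
      ∑' i, ENNReal.ofReal (ρ i ^ r) ≤ ε := by
  rw [Measure.hausdorffMeasure_apply] at hS
  have hε2 : ε / 2 ≠ 0 := by simp [hε]
  have h1 : (⨅ (t : ℕ → Set K) (_ : S ⊆ ⋃ n, t n) (_ : ∀ n, Metric.ediam (t n) ≤ (1/2 : ℝ≥0∞)),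
          ∑' n, ⨆ _ : (t n).Nonempty, Metric.ediam (t n) ^ r) < ε / 2 := by
    refine lt_of_le_of_lt ?_ (pos_iff_ne_zero.2 hε2)
    rw [← hS]
    exact le_iSup₂_of_le (1/2 : ℝ≥0∞) (by simp) le_rfl
  simp only [iInf_lt_iff] at h1
  obtain ⟨t, hcov, hdiam, hsum⟩ := h1
  obtain ⟨ε', hε'pos, hε'sum⟩ := ENNReal.exists_pos_sum_of_countable hε2 ℕ
  have h2 : ∀ i, ∃ ρ : ℝ, (Metric.ediam (t i)).toReal < ρ ∧ ρ ≤ 1 ∧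
      ρ ^ r < (Metric.ediam (t i)).toReal ^ r + ε' i := by
    intro i
    have hd : (Metric.ediam (t i)).toReal < 1 := by
      have := ENNReal.toReal_mono (by simp) (hdiam i)
      simp at this
      linarith
    have hc : ContinuousAt (fun y : ℝ => y ^ r) (Metric.ediam (t i)).toReal :=
      Real.continuousAt_rpow_const _ _ (Or.inr hr.le)
    have h3 := hc.eventually_lt (continuousAt_const (y := (Metric.ediam (t i)).toReal ^ r + ε' i))
      (by have := hε'pos i; simpa using this)
    have h4 : ∀ᶠ y in 𝓝[>] (Metric.ediam (t i)).toReal, y ^ r < (Metric.ediam (t i)).toReal ^ r + ε' i :=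
      nhdsWithin_le_nhds h3
    obtain ⟨ρ, h5, h6⟩ := (h4.and (Ioo_mem_nhdsGT hd)).exists
    exact ⟨ρ, h6.1, h6.2.le, h5⟩
  choose ρ hρ1 hρ2 hρ3 using h2
  have hx : ∀ i, ∃ x : K, t i ⊆ Metric.ball x (ρ i) := by
    intro i
    rcases (t i).eq_empty_or_nonempty with h | ⟨x, hx⟩
    · exact ⟨Classical.arbitrary K, by simp [h]⟩
    · refine ⟨x, fun y hy => ?_⟩
      rw [Metric.mem_ball, dist_edist]
      refine lt_of_le_of_lt (ENNReal.toReal_mono ?_ (Metric.edist_le_ediam_of_mem hy hx)) (hρ1 i)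
      exact ne_top_of_le_ne_top (by simp) (hdiam i)
  choose x hx using hx
  refine ⟨x, ρ, fun i => ⟨lt_of_le_of_lt ENNReal.toReal_nonneg (hρ1 i), hρ2 i⟩,
    hcov.trans (iUnion_mono hx), ?_⟩
  calc ∑' i, ENNReal.ofReal (ρ i ^ r)
      ≤ ∑' i, ((⨆ _ : (t i).Nonempty, Metric.ediam (t i) ^ r) + ε' i) := by
        refine ENNReal.tsum_le_tsum fun i => ?_
        refine (ENNReal.ofReal_le_ofReal (hρ3 i).le).trans ?_
        rw [ENNReal.ofReal_add (by positivity) (by positivity), ENNReal.ofReal_coe_nnreal]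
        gcongr
        rw [← ENNReal.ofReal_rpow_of_nonneg ENNReal.toReal_nonneg hr.le,
          ENNReal.ofReal_toReal (ne_top_of_le_ne_top (by simp) (hdiam i))]
        rcases (t i).eq_empty_or_nonempty with h | h
        · simp [h, hr]
        · simp [h]
    _ ≤ ε := by
        rw [ENNReal.tsum_add, ← ENNReal.add_halves ε]
        gcongr

theorem fr_main {K : Type*} [MetricSpace K] [CompactSpace K] [MeasurableSpace K] [BorelSpace K]
    (ν : Measure K) [IsFiniteMeasure ν] (r r' : ℝ) (hr : 0 < r) (hrr : r < r')
    (hK : 0 < μH[r'] (univ : Set K)) :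
    ∃ B : Set K, IsCompact B ∧ ν B = 0 ∧ 0 < μH[r] B := by
  have hne : Nonempty K := by
    by_contra h
    rw [not_nonempty_iff] at h
    simp [Set.univ_eq_empty_iff.2 h] at hK
  have hr' : 0 < r' := hr.trans hrr
  obtain ⟨μ, hfin, hpos, hball⟩ := frostman r' hr' hK
  have hna : NullSingletonClass μ := ⟨fun x => by
    have h1 : Tendsto (fun ρ : ℝ => ENNReal.ofReal (ρ ^ r')) (𝓝[>] 0) (𝓝 0) := by
      have : Tendsto (fun ρ : ℝ => ρ ^ r') (𝓝[>] 0) (𝓝 0) := by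
        have h := (Real.continuousAt_rpow_const 0 r' (Or.inr hr'.le)).tendsto
        rw [Real.zero_rpow hr'.ne'] at h
        exact h.mono_left nhdsWithin_le_nhds
      simpa using ENNReal.tendsto_ofReal this
    refine le_antisymm (ge_of_tendsto h1 ?_) zero_le
    filter_upwards [self_mem_nhdsWithin] with ρ hρ
    exact (measure_mono (by simpa using hρ)).trans (hball x ρ hρ)⟩
  let q : ℝ := (1/2 : ℝ) ^ (1 / (r' - r))
  have hsub : 0 < r' - r := by linarith
  have hq0 : 0 < q := by positivity
  have hq1 : q < 1 := Real.rpow_lt_one (by norm_num) (by norm_num) (by positivity)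
  have hqn : ∀ n : ℕ, (q ^ n) ^ (r' - r) = (1/2 : ℝ) ^ n := by
    intro n
    rw [← Real.rpow_natCast, ← Real.rpow_mul hq0.le, mul_comm (n:ℝ), Real.rpow_mul hq0.le]
    have : q ^ (r' - r) = 1/2 := by
      rw [← Real.rpow_mul (by norm_num), one_div_mul_cancel hsub.ne', Real.rpow_one]
    rw [this, Real.rpow_natCast]
  choose φ hφ hφd using fun n : ℕ => fr_partition (K := K) (q ^ n) (by positivity)
  let ψ : ℕ → K → ℕ := fun n => Nat.rec (φ 0) (fun n p x => Nat.pair (p x) (φ (n+1) x)) n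
  have hψ : ∀ n, Measurable (ψ n) := by
    intro n
    induction n with
    | zero => exact hφ 0
    | succ n ih =>
      exact (measurable_of_countable (fun p : ℕ × ℕ => Nat.pair p.1 p.2)).comp
        (ih.prodMk (hφ (n+1)))
  have hfac : ∀ n m, n ≤ m → ∃ h : ℕ → ℕ, φ n = h ∘ ψ m := by
    have hself : ∀ n, ∃ h : ℕ → ℕ, φ n = h ∘ ψ n := by
      intro n
      cases n with
      | zero => exact ⟨id, rfl⟩
      | succ n => exact ⟨fun k => (Nat.unpair k).2, by ext x; simp [ψ]⟩
    intro n m hnm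
    induction m, hnm using Nat.le_induction with
    | base => exact hself n
    | succ m hnm ih =>
      obtain ⟨h, hh⟩ := ih
      exact ⟨fun k => h (Nat.unpair k).1, by rw [hh]; ext x; simp [ψ]⟩
  have hη : ∀ n : ℕ, μ univ * (4 ^ (n+1))⁻¹ ≠ 0 := by
    intro n
    refine mul_ne_zero hpos.ne' ?_
    simp
  choose G hG1 hG2 hG3 hG4 hG5 using fun (n : ℕ) (B : {B : Set K // IsCompact B}) =>
    fr_step μ ν B.1 B.2 (ψ n) (hψ n) _ (hη n)
  let Bs : ℕ → {B : Set K // IsCompact B} := fun n =>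
    Nat.rec ⟨univ, isCompact_univ⟩ (fun n B => ⟨G n B, hG2 n B⟩) n
  let Bn : ℕ → Set K := fun n => (Bs n).1
  have hB0 : Bn 0 = univ := rfl
  have hBc : ∀ n, IsCompact (Bn n) := fun n => (Bs n).2
  have hanti : Antitone Bn := antitone_nat_of_succ_le fun n => hG1 n (Bs n)
  have hBν : ∀ n, 2 * ν (Bn (n+1)) ≤ ν (Bn n) := fun n => hG3 n (Bs n)
  have hBT : ∀ n, ∀ T : Set ℕ, 2 * μ (Bn (n+1) ∩ ψ n ⁻¹' T) ≤ μ (Bn n ∩ ψ n ⁻¹' T) :=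
    fun n => hG4 n (Bs n)
  have hBμ : ∀ n, μ (Bn n) ≤ 2 * μ (Bn (n+1)) + μ univ * (4 ^ (n+1))⁻¹ := fun n => hG5 n (Bs n)
  clear_value Bn
  have hν2 : ∀ n, 2 ^ n * ν (Bn n) ≤ ν univ := by
    intro n
    induction n with
    | zero => simp [hB0]
    | succ n ih =>
      refine le_trans ?_ ih
      rw [pow_succ, mul_assoc]
      gcongr
      exact hBν n
  have hsat : ∀ n m, n ≤ m → ∀ T : Set ℕ,
      2 ^ m * μ (Bn m ∩ φ n ⁻¹' T) ≤ 2 ^ n * μ (Bn n ∩ φ n ⁻¹' T) := by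
    intro n m hnm T
    induction m, hnm using Nat.le_induction with
    | base => exact le_rfl
    | succ m hnm ih =>
      refine le_trans ?_ ih
      obtain ⟨h, hh⟩ := hfac n m hnm
      rw [pow_succ, mul_assoc, hh, preimage_comp]
      gcongr
      exact hBT m _
  have hmass : ∀ n : ℕ, μ.real univ * (1/2 + (1/2) ^ (n+1)) ≤ 2 ^ n * μ.real (Bn n) := by
    intro n
    induction n with
    | zero => rw [hB0]; norm_num
    | succ n ih =>
      have h1 : μ.real (Bn n) ≤ 2 * μ.real (Bn (n+1)) + μ.real univ * (4 ^ (n+1))⁻¹ := by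
        have h := ENNReal.toReal_mono (by finiteness) (hBμ n)
        rw [ENNReal.toReal_add (by finiteness) (by finiteness), ENNReal.toReal_mul,
          ENNReal.toReal_mul] at h
        simpa [Measure.real] using h
      have h2 := mul_le_mul_of_nonneg_left h1 (by positivity : (0:ℝ) ≤ 2 ^ n)
      have h3 : (2:ℝ) ^ n * (4 ^ (n+1))⁻¹ = (1/2) ^ (n+2) := by
        rw [show (4:ℝ) = 2 * 2 by norm_num, mul_pow, one_div, inv_pow]
        field_simp
        ring
      have h4 : (2:ℝ) ^ n * (2 * μ.real (Bn (n+1)) + μ.real univ * (4 ^ (n+1))⁻¹) =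
          2 ^ (n+1) * μ.real (Bn (n+1)) + μ.real univ * (1/2) ^ (n+2) := by
        rw [← h3]; ring
      have h5 : ((1:ℝ)/2) ^ (n+1) = 2 * (1/2) ^ (n+2) := by ring
      rw [h5] at ih
      rw [h4] at h2
      show μ.real univ * (1/2 + (1/2) ^ (n+2)) ≤ _
      linarith
  have hbound : ∀ m x ρ, 0 < ρ → ρ ≤ 1 →
      2 ^ m * μ (Bn m ∩ Metric.ball x ρ) ≤ ENNReal.ofReal (2 ^ (r' + 1)) * ENNReal.ofReal (ρ ^ r) := by
    intro m x ρ hρ hρ1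
    obtain ⟨n, hn1, hn2⟩ := exists_nat_pow_near_of_lt_one hρ hρ1 hq0 hq1
    have hkey : 2 ^ n * ρ ^ r' ≤ ρ ^ r := by
      have h1 : ρ ^ r' = ρ ^ (r' - r) * ρ ^ r := by
        rw [← Real.rpow_add hρ]; congr 1; ring
      have h2 : ρ ^ (r' - r) ≤ (1/2) ^ n := by
        rw [← hqn]
        exact Real.rpow_le_rpow hρ.le hn2 hsub.le
      rw [h1, ← mul_assoc]
      refine mul_le_of_le_one_left (by positivity) ?_
      calc (2:ℝ) ^ n * ρ ^ (r' - r) ≤ 2 ^ n * (1/2) ^ n := by gcongr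
        _ = 1 := by rw [← mul_pow]; norm_num
    have h2n : ∀ k : ℕ, (2:ℝ≥0∞) ^ k = ENNReal.ofReal (2 ^ k) := by
      intro k; rw [ENNReal.ofReal_pow (by norm_num)]; simp
    rw [← ENNReal.ofReal_mul (by positivity)]
    rcases Nat.lt_or_ge n m with hm | hm
    · -- saturation
      have hsub1 : Metric.ball x ρ ⊆ φ (n+1) ⁻¹' (φ (n+1) '' Metric.ball x ρ) :=
        subset_preimage_image _ _
      have hsub2 : φ (n+1) ⁻¹' (φ (n+1) '' Metric.ball x ρ) ⊆ Metric.ball x (2 * ρ) := by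
        rintro y ⟨z, hz, hzy⟩
        have h1 := hφd (n+1) z y hzy
        rw [Metric.mem_ball] at hz ⊢
        have h2 := dist_triangle_left y x z
        linarith
      calc 2 ^ m * μ (Bn m ∩ Metric.ball x ρ)
          ≤ 2 ^ m * μ (Bn m ∩ φ (n+1) ⁻¹' (φ (n+1) '' Metric.ball x ρ)) := by gcongr
        _ ≤ 2 ^ (n+1) * μ (Bn (n+1) ∩ φ (n+1) ⁻¹' (φ (n+1) '' Metric.ball x ρ)) :=
            hsat (n+1) m hm _
        _ ≤ 2 ^ (n+1) * μ (Metric.ball x (2 * ρ)) := by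
            gcongr
            exact inter_subset_right.trans hsub2
        _ ≤ 2 ^ (n+1) * ENNReal.ofReal ((2 * ρ) ^ r') := by
            gcongr
            exact hball x _ (by linarith)
        _ ≤ _ := by
            rw [h2n, ← ENNReal.ofReal_mul (by positivity)]
            apply ENNReal.ofReal_le_ofReal
            rw [Real.mul_rpow (by norm_num) hρ.le, Real.rpow_add (by norm_num), Real.rpow_one]
            calc (2:ℝ) ^ (n+1) * (2 ^ r' * ρ ^ r') = 2 ^ r' * 2 * (2 ^ n * ρ ^ r') := by ring
              _ ≤ _ := by gcongr
    · calc 2 ^ m * μ (Bn m ∩ Metric.ball x ρ)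
          ≤ 2 ^ n * μ (Metric.ball x ρ) := by
            gcongr
            · norm_num
            · exact inter_subset_right
        _ ≤ 2 ^ n * ENNReal.ofReal (ρ ^ r') := by
            gcongr
            exact hball x ρ hρ
        _ ≤ _ := by
            rw [h2n, ← ENNReal.ofReal_mul (by positivity)]
            apply ENNReal.ofReal_le_ofReal
            have h1 : (1:ℝ) ≤ 2 ^ (r' + 1) := Real.one_le_rpow (by norm_num) (by linarith)
            have h3 : 0 ≤ ρ ^ r := by positivity
            nlinarith
  refine ⟨⋂ n, Bn n, (isClosed_iInter fun n => (hBc n).isClosed).isCompact, ?_, ?_⟩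
  · have hT : Tendsto (fun n : ℕ => ν univ * (2⁻¹ : ℝ≥0∞) ^ n) atTop (𝓝 0) := by
      have := ENNReal.Tendsto.const_mul (a := ν univ)
        (ENNReal.tendsto_pow_atTop_nhds_zero_of_lt_one (r := 2⁻¹) (by simp)) (Or.inr (by finiteness))
      simpa using this
    refine le_antisymm (ge_of_tendsto' hT fun n => ?_) zero_le
    refine (measure_mono (iInter_subset _ n)).trans ?_
    rw [← ENNReal.inv_pow, ← div_eq_mul_inv, ENNReal.le_div_iff_mul_le (by simp) (by simp), mul_comm]
    exact hν2 n
  · rw [pos_iff_ne_zero]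
    intro h0
    let C : ℝ≥0∞ := ENNReal.ofReal (2 ^ (r' + 1))
    have hC0 : C ≠ 0 := by
      simp only [C, ne_eq, ENNReal.ofReal_eq_zero, not_le]; positivity
    have hCt : C ≠ ∞ := ENNReal.ofReal_ne_top
    obtain ⟨x, ρ, hρ, hcov, hsum⟩ := fr_cover r hr _ h0 (μ univ / (4 * C))
      (ENNReal.div_ne_zero.2 ⟨hpos.ne', by finiteness⟩)
    obtain ⟨n, hn⟩ := exists_subset_nhds_of_isCompact (hanti.directed_ge) hBc
      (U := ⋃ i, Metric.ball (x i) (ρ i))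
      (fun y hy => (isOpen_iUnion fun i => Metric.isOpen_ball).mem_nhds (hcov hy))
    have h1 : 2 ^ n * μ (Bn n) ≤ μ univ / 4 := by
      calc 2 ^ n * μ (Bn n) ≤ 2 ^ n * ∑' i, μ (Bn n ∩ Metric.ball (x i) (ρ i)) := by
            gcongr
            refine le_trans (measure_mono ?_) (measure_iUnion_le _)
            rw [← inter_iUnion]
            exact subset_inter subset_rfl hn
        _ = ∑' i, 2 ^ n * μ (Bn n ∩ Metric.ball (x i) (ρ i)) := by rw [ENNReal.tsum_mul_left]
        _ ≤ ∑' i, C * ENNReal.ofReal (ρ i ^ r) :=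
            ENNReal.tsum_le_tsum fun i => hbound n _ _ (hρ i).1 (hρ i).2
        _ = C * ∑' i, ENNReal.ofReal (ρ i ^ r) := by rw [ENNReal.tsum_mul_left]
        _ ≤ C * (μ univ / (4 * C)) := by gcongr
        _ = μ univ / 4 := by
            rw [div_eq_mul_inv, ENNReal.mul_inv (by simp) (by simp), div_eq_mul_inv]
            rw [show C * (μ univ * (4⁻¹ * C⁻¹)) = (C * C⁻¹) * (μ univ * 4⁻¹) by ring,
              ENNReal.mul_inv_cancel hC0 hCt, one_mul]
    have h2 := ENNReal.toReal_mono (by finiteness) h1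
    have h3 := hmass n
    have h4 : 0 < μ.real univ := ENNReal.toReal_pos hpos.ne' (by finiteness)
    rw [ENNReal.toReal_mul, ENNReal.toReal_div] at h2
    simp only [ENNReal.toReal_pow, ENNReal.toReal_ofNat] at h2
    have h5 : (0:ℝ) < (1/2)^(n+1) := by positivity
    simp only [Measure.real] at h3 h4
    nlinarith

theorem hausdorffM_eq {Z : Type*} [EMetricSpace Z] [MeasurableSpace Z] [BorelSpace Z] (s : ℝ≥0) :
    (hausdorffM (sGauge s) : OuterMeasure Z) = (μH[(s:ℝ)] : Measure Z).toOuterMeasure := by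
  rw [Measure.hausdorffMeasure, Measure.mkMetric_toOuterMeasure]
  unfold hausdorffM
  have : (fun d : ℝ≥0∞ => sGauge s d.toNNReal) =ᶠ[𝓝 0] fun d => d ^ (s:ℝ) := by
    filter_upwards [Iio_mem_nhds (show (0:ℝ≥0∞) < 1 by simp)] with d hd
    have : d ≠ ∞ := (lt_trans hd (by simp)).ne
    simp [sGauge, ENNReal.coe_toNNReal this]
  exact le_antisymm (OuterMeasure.mkMetric_mono this.le)
    (OuterMeasure.mkMetric_mono this.symm.le)

theorem hausdorffM_apply {Z : Type*} [EMetricSpace Z] [MeasurableSpace Z] [BorelSpace Z] (s : ℝ≥0)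
    (S : Set Z) : hausdorffM (sGauge s) S = μH[(s:ℝ)] S := by
  rw [hausdorffM_eq]; rfl

theorem carath_null {X : Type*} [MeasurableSpace X] (μ : Measure X) (A : ℕ → Set X)
    (hA : ∀ n, μ.toOuterMeasure.IsCaratheodory (A n) ∧ μ (A n) < ⊤) (hU : (univ : Set X) = ⋃ n, A n)
    (S : Set X) (hS : μ.toOuterMeasure.IsCaratheodory S) : NullMeasurableSet S μ := by
  have : S = ⋃ n, S ∩ A n := by rw [← inter_iUnion, ← hU, inter_univ]
  rw [this]
  refine NullMeasurableSet.iUnion fun n => ?_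
  have hc : μ.toOuterMeasure.IsCaratheodory (S ∩ A n) :=
    μ.toOuterMeasure.isCaratheodory_inter hS (hA n).1
  have hfin : μ (S ∩ A n) ≠ ⊤ := (lt_of_le_of_lt (measure_mono inter_subset_right) (hA n).2).ne
  have h1 : μ (toMeasurable μ (S ∩ A n)) = μ (toMeasurable μ (S ∩ A n) ∩ (S ∩ A n)) +
      μ (toMeasurable μ (S ∩ A n) \ (S ∩ A n)) := hc _
  rw [inter_eq_self_of_subset_right (subset_toMeasurable μ _), measure_toMeasurable] at h1
  have h2 : μ (toMeasurable μ (S ∩ A n) \ (S ∩ A n)) = 0 := by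
    have : μ (S ∩ A n) + μ (toMeasurable μ (S ∩ A n) \ (S ∩ A n)) = μ (S ∩ A n) + 0 := by
      rw [← h1, add_zero]
    exact (ENNReal.add_right_inj hfin).1 this
  have h3 : (S ∩ A n : Set X) =ᵐ[μ] toMeasurable μ (S ∩ A n) :=
    ae_eq_set.2 ⟨by rw [sdiff_eq_empty.2 (subset_toMeasurable μ _), measure_empty], h2⟩
  exact NullMeasurableSet.congr (measurableSet_toMeasurable _ _).nullMeasurableSet h3.symm

theorem lusin_closed {X Y : Type*} [MetricSpace X] [MeasurableSpace X] [BorelSpace X]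
    [TopologicalSpace Y] [SecondCountableTopology Y] (μ : Measure X) [IsFiniteMeasure μ] (f : X → Y)
    (hf : ∀ O, IsOpen O → NullMeasurableSet (f ⁻¹' O) μ) (ε : ℝ≥0∞) (hε : ε ≠ 0) :
    ∃ C, IsClosed C ∧ μ Cᶜ ≤ ε ∧ ContinuousOn f C := by
  obtain ⟨b, hbc, -, hb⟩ := TopologicalSpace.exists_countable_basis Y
  have : Countable b := hbc
  obtain ⟨ε', hε'pos, hε'sum⟩ := ENNReal.exists_pos_sum_of_countable hε b
  have hin : ∀ S, NullMeasurableSet S μ → ∀ δ : ℝ≥0∞, δ ≠ 0 → ∃ F ⊆ S, IsClosed F ∧ μ (S \ F) ≤ δ := by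
    intro S hS δ hδ
    obtain ⟨T, hTS, hT, hae⟩ := hS.exists_measurable_subset_ae_eq
    obtain ⟨F, hFT, hF, hlt⟩ := hT.exists_isClosed_sdiff_lt (measure_ne_top μ T) hδ
    refine ⟨F, hFT.trans hTS, hF, ?_⟩
    have h0 : μ (S \ T) = 0 := (ae_eq_set.1 hae).2
    calc μ (S \ F) ≤ μ ((S \ T) ∪ (T \ F)) := measure_mono (fun x hx => by
          by_cases hxT : x ∈ T
          · exact Or.inr ⟨hxT, hx.2⟩
          · exact Or.inl ⟨hx.1, hxT⟩)
      _ ≤ μ (S \ T) + μ (T \ F) := measure_union_le _ _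
      _ ≤ δ := by rw [h0, zero_add]; exact hlt.le
  have hFG : ∀ U : b, ∃ F G : Set X, IsClosed F ∧ IsClosed G ∧ F ⊆ f ⁻¹' U.1 ∧ G ⊆ (f ⁻¹' U.1)ᶜ ∧
      μ (F ∪ G)ᶜ ≤ ε' U := by
    intro U
    have hU := hf U.1 (hb.isOpen U.2)
    have hδ : (ε' U : ℝ≥0∞) / 2 ≠ 0 := by simp [(hε'pos U).ne']
    obtain ⟨F, hF1, hF2, hF3⟩ := hin _ hU _ hδ
    obtain ⟨G, hG1, hG2, hG3⟩ := hin _ hU.compl _ hδ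
    refine ⟨F, G, hF2, hG2, hF1, hG1, ?_⟩
    rw [← ENNReal.add_halves (ε' U : ℝ≥0∞)]
    refine le_trans (measure_mono (t := (f ⁻¹' U.1 \ F) ∪ ((f ⁻¹' U.1)ᶜ \ G)) ?_)
      ((measure_union_le _ _).trans (add_le_add hF3 hG3))
    intro x hx
    simp only [mem_compl_iff, mem_union, not_or] at hx
    by_cases h : x ∈ f ⁻¹' U.1
    · exact Or.inl ⟨h, hx.1⟩
    · exact Or.inr ⟨h, hx.2⟩
  choose F G hF hG hFU hGU hμ using hFG
  refine ⟨⋂ U, (F U ∪ G U), isClosed_iInter fun U => (hF U).union (hG U), ?_, ?_⟩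
  · rw [compl_iInter]
    exact (measure_iUnion_le _).trans ((ENNReal.tsum_le_tsum hμ).trans hε'sum.le)
  · intro x hx
    refine (hb.nhds_hasBasis.tendsto_right_iff).2 ?_
    rintro U ⟨hUb, hxU⟩
    have hxG : x ∈ (G ⟨U, hUb⟩)ᶜ := fun h => hGU ⟨U, hUb⟩ h hxU
    filter_upwards [nhdsWithin_le_nhds ((hG ⟨U, hUb⟩).isOpen_compl.mem_nhds hxG),
      self_mem_nhdsWithin] with y hy hyC
    rcases mem_iInter.1 hyC ⟨U, hUb⟩ with h | h
    · exact hFU _ h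
    · exact absurd h hy

theorem secondCountable_of_hausdorff {Y : Type*} [MetricSpace Y] [MeasurableSpace Y] [BorelSpace Y]
    (d : ℝ) (h : μH[d] (univ : Set Y) = 0) : SecondCountableTopology Y := by
  refine Metric.secondCountable_of_almost_dense_set fun ε hε => ?_
  rw [Measure.hausdorffMeasure_apply] at h
  have h1 : (⨅ (t : ℕ → Set Y) (_ : univ ⊆ ⋃ n, t n) (_ : ∀ n, Metric.ediam (t n) ≤ ENNReal.ofReal ε),
          ∑' n, ⨆ _ : (t n).Nonempty, Metric.ediam (t n) ^ d) < 1 := by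
    refine lt_of_le_of_lt ?_ zero_lt_one
    rw [← h]
    exact le_iSup₂_of_le (ENNReal.ofReal ε) (by simpa using hε) le_rfl
  simp only [iInf_lt_iff] at h1
  obtain ⟨t, hcov, hdiam, -⟩ := h1
  choose g hg using fun n : {n // (t n).Nonempty} => n.2
  refine ⟨range g, countable_range g, fun x => ?_⟩
  obtain ⟨n, hn⟩ := mem_iUnion.1 (hcov (mem_univ x))
  refine ⟨g ⟨n, x, hn⟩, mem_range_self _, ?_⟩
  have := (Metric.edist_le_ediam_of_mem hn (hg ⟨n, x, hn⟩)).trans (hdiam n)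
  rw [edist_dist] at this
  exact (ENNReal.ofReal_le_ofReal_iff hε.le).1 this

/-- null set with large image for compact pieces -/
theorem piece {X Y : Type*} [MetricSpace X] [MeasurableSpace X] [BorelSpace X]
    [MetricSpace Y] [MeasurableSpace Y] [BorelSpace Y] (μ : Measure X) [IsFiniteMeasure μ] (f : X → Y)
    (D : Set X) (hD : IsCompact D) (hf : ContinuousOn f D) (r r' : ℝ) (hr : 0 < r) (hrr : r < r')
    (h : 0 < μH[r'] (f '' D)) : ∃ N : Set X, μ N = 0 ∧ 0 < μH[r] (f '' N) := by
  have hK : IsCompact (f '' D) := hD.image_of_continuousOn hf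
  have : CompactSpace (f '' D) := isCompact_iff_compactSpace.1 hK
  let g : D → f '' D := fun x => ⟨f x, mem_image_of_mem f x.2⟩
  have hg : Continuous g := Continuous.subtype_mk hf.domRestrict _
  let ν : Measure (f '' D) := (μ.comap ((↑) : D → X)).map g
  have hDm := hD.measurableSet
  have : IsFiniteMeasure (μ.comap ((↑) : D → X)) := by
    refine ⟨?_⟩
    rw [(MeasurableEmbedding.subtype_coe hDm).comap_apply]
    exact measure_lt_top _ _
  have hiso : Isometry ((↑) : f '' D → Y) := isometry_subtype_coe
  have h' : 0 < μH[r'] (univ : Set (f '' D)) := by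
    rw [← hiso.hausdorffMeasure_image (Or.inl (hr.trans hrr).le)]
    rw [image_univ, Subtype.range_coe]
    exact h
  obtain ⟨B, hB, hν, hH⟩ := fr_main ν r r' hr hrr h'
  refine ⟨(↑) '' (g ⁻¹' B), ?_, ?_⟩
  · rw [← (MeasurableEmbedding.subtype_coe hDm).comap_apply,
      ← Measure.map_apply hg.measurable hB.measurableSet]
    exact hν
  · have : f '' ((↑) '' (g ⁻¹' B)) = (↑) '' B := by
      ext y
      constructor
      · rintro ⟨_, ⟨x, hx, rfl⟩, rfl⟩
        exact ⟨g x, hx, rfl⟩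
      · rintro ⟨⟨y, x, hx, rfl⟩, hy, rfl⟩
        exact ⟨x, ⟨⟨x, hx⟩, hy, rfl⟩, rfl⟩
    rw [this, hiso.hausdorffMeasure_image (Or.inl hr.le)]
    exact hH

/-- Corollary `Dimension`. -/
theorem statement_16 {X : Type*} [MetricSpace X] [TopologicalSpace.SeparableSpace X]
    {Y : Type*} [MetricSpace Y]
    (s : ℝ≥0) (hs : 0 < s) (t : ℝ≥0)
    (hsf : SigmaFiniteSet (hausdorffM (sGauge s)) (Set.univ : Set X))
    (hdecomp : ∃ (K : ℕ → Set X) (N : Set X), (∀ n, IsCompact (K n)) ∧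
      hausdorffM (sGauge s) N = 0 ∧ Set.univ = (⋃ n, K n) ∪ N)
    (hdim : hDim (Set.univ : Set Y) = (t : ℝ≥0∞))
    (f : X → Y) (hsurj : Function.Surjective f)
    (hmeas : ∀ O : Set Y, IsOpen O →
      (hausdorffM (sGauge s)).IsCaratheodory (f ⁻¹' O)) :
    ∃ N : Set X, hausdorffM (sGauge s) N = 0 ∧ hDim (f '' N) = (t : ℝ≥0∞) := by
  borelize X Y
  have hup : ∀ S : Set Y, hDim S ≤ (t : ℝ≥0∞) := by
    intro S
    rw [← hdim]
    refine iSup_mono fun a => iSup_mono' fun ha => ⟨ha.trans_le (measure_mono (subset_univ S)), le_rfl⟩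
  have hlow : ∀ (S : Set Y) (r : ℝ≥0), 0 < μH[(r:ℝ)] S → (r : ℝ≥0∞) ≤ hDim S := by
    intro S r hr
    rw [← hausdorffM_apply] at hr
    exact le_iSup₂_of_le (f := fun (s : ℝ≥0) (_ : 0 < hausdorffM (sGauge s) S) => (s : ℝ≥0∞)) r hr le_rfl
  rcases eq_or_ne t 0 with rfl | ht0
  · exact ⟨∅, by simp, le_antisymm (hup _) (by simp)⟩
  have htpos : 0 < t := pos_iff_ne_zero.2 ht0
  have hY0 : μH[((t + 1 : ℝ≥0) : ℝ)] (univ : Set Y) = 0 := by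
    by_contra h
    have h1 := (hlow univ (t+1) (pos_iff_ne_zero.2 h)).trans (hup _)
    have h2 : t + 1 ≤ t := by exact_mod_cast h1
    exact absurd h2 (by simp)
  have hsc : SecondCountableTopology Y := secondCountable_of_hausdorff _ hY0
  have hYr : ∀ r : ℝ≥0, r < t → 0 < μH[(r:ℝ)] (univ : Set Y) := by
    intro r hr
    have h1 : (r : ℝ≥0∞) < hDim (univ : Set Y) := by rw [hdim]; exact_mod_cast hr
    simp only [hDim, lt_iSup_iff] at h1
    obtain ⟨a, ha, hra⟩ := h1
    rw [hausdorffM_apply] at ha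
    refine ha.trans_le (Measure.hausdorffMeasure_mono ?_ _)
    have : r < a := by exact_mod_cast hra
    exact_mod_cast this.le
  simp only [hausdorffM_apply]
  rw [hausdorffM_eq] at hmeas
  obtain ⟨A, hA, hAU⟩ := hsf
  simp only [hausdorffM_eq] at hA
  obtain ⟨Kc, N0, hKc, hN0, hKU⟩ := hdecomp
  rw [hausdorffM_apply] at hN0
  have hnull : ∀ O : Set Y, IsOpen O → NullMeasurableSet (f ⁻¹' O) (μH[(s:ℝ)] : Measure X) :=
    fun O hO => carath_null _ A hA hAU _ (hmeas O hO)
  have hsig : SigmaFinite (μH[(s:ℝ)] : Measure X) := by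
    refine ⟨⟨⟨fun n => toMeasurable μH[(s:ℝ)] (A n), fun _ => trivial, fun n => ?_, ?_⟩⟩⟩
    · rw [measure_toMeasurable]; exact (hA n).2
    · rw [← univ_subset_iff, hAU]
      exact iUnion_mono fun n => subset_toMeasurable _ _
  let lam : Measure X := (μH[(s:ℝ)] : Measure X).toFinite
  have hlam : ∀ S : Set X, lam S = 0 ↔ μH[(s:ℝ)] S = 0 := fun S => MeasureTheory.toFinite_apply_eq_zero_iff
  have hnull' : ∀ O : Set Y, IsOpen O → NullMeasurableSet (f ⁻¹' O) lam :=
    fun O hO => (hnull O hO).mono_ac (toFinite_absolutelyContinuous _)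
  choose C hC hCε hCf using fun j : ℕ => lusin_closed lam f hnull' ((j:ℝ≥0∞) + 1)⁻¹
    (by simp)
  have hCnull : lam (⋂ j, (C j)ᶜ) = 0 := by
    have hT : Tendsto (fun j : ℕ => ((j:ℝ≥0∞) + 1)⁻¹) atTop (𝓝 0) := by
      have := ENNReal.tendsto_inv_nat_nhds_zero.comp (tendsto_add_atTop_nat 1)
      simpa [Function.comp_def] using this
    exact le_antisymm (ge_of_tendsto' hT fun j => (measure_mono (iInter_subset _ j)).trans (hCε j))
      zero_le
  have hXcov : (univ : Set X) ⊆ (N0 ∪ ⋂ j, (C j)ᶜ) ∪ ⋃ p : ℕ × ℕ, (C p.1 ∩ Kc p.2) := by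
    intro x _
    by_cases hx : x ∈ N0 ∪ ⋂ j, (C j)ᶜ
    · exact Or.inl hx
    · right
      simp only [mem_union, not_or, mem_iInter, mem_compl_iff, not_forall, not_not] at hx
      obtain ⟨hx1, j, hj⟩ := hx
      have : x ∈ (⋃ n, Kc n) ∪ N0 := hKU ▸ mem_univ x
      rcases this with h | h
      · obtain ⟨n, hn⟩ := mem_iUnion.1 h
        exact mem_iUnion.2 ⟨(j, n), hj, hn⟩
      · exact absurd h hx1
  have hex : ∀ r : ℝ≥0, 0 < r → r < t → ∃ N : Set X, μH[(s:ℝ)] N = 0 ∧ 0 < μH[(r:ℝ)] (f '' N) := by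
    intro r hr hrt
    obtain ⟨r', hrr', hr't⟩ := exists_between hrt
    by_cases h1 : 0 < μH[(r':ℝ)] (f '' (N0 ∪ ⋂ j, (C j)ᶜ))
    · refine ⟨N0 ∪ ⋂ j, (C j)ᶜ, measure_union_null hN0 ((hlam _).1 hCnull), ?_⟩
      exact h1.trans_le (Measure.hausdorffMeasure_mono (by exact_mod_cast hrr'.le) _)
    · have h2 : ∃ p : ℕ × ℕ, 0 < μH[(r':ℝ)] (f '' (C p.1 ∩ Kc p.2)) := by
        by_contra! hcon
        refine absurd (hYr r' hr't) (not_lt.2 ?_)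
        have h3 : (univ : Set Y) ⊆ f '' (N0 ∪ ⋂ j, (C j)ᶜ) ∪ ⋃ p : ℕ × ℕ, f '' (C p.1 ∩ Kc p.2) := by
          rw [← image_iUnion, ← image_union, ← hsurj.range_eq, ← image_univ]
          exact image_mono hXcov
        refine (measure_mono h3).trans (le_of_eq ?_)
        exact measure_union_null (le_antisymm (not_lt.1 h1) zero_le)
          (measure_iUnion_null fun p => le_antisymm (hcon p) zero_le)
      obtain ⟨p, hp⟩ := h2
      obtain ⟨N, hN1, hN2⟩ := piece lam f (C p.1 ∩ Kc p.2) ((hKc p.2).inter_left (hC p.1))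
        ((hCf p.1).mono inter_subset_left) r r' (by exact_mod_cast hr) (by exact_mod_cast hrr') hp
      exact ⟨N, (hlam _).1 hN1, hN2⟩
  obtain ⟨u, -, hu, hut⟩ := exists_seq_strictMono_tendsto' htpos
  choose N hN1 hN2 using fun n => hex (u n) (hu n).1 (hu n).2
  refine ⟨⋃ n, N n, measure_iUnion_null hN1, le_antisymm (hup _) ?_⟩
  refine le_of_tendsto' (ENNReal.tendsto_coe.2 hut) fun n => ?_
  exact hlow _ _ ((hN2 n).trans_le (measure_mono (image_mono (subset_iUnion N n))))
end

section
/- Let X be an analytic Hausdorff space (a Hausdorff topological space that is empty or a continuous image of ℕ^ℕ) and μ a Borel measure on X with μ(X) < ∞. Let (Y, d) be a complete separable metric space and h a continuous Hausdorff function with h(0) = 0 such that at least one of the following holds: (a) h is of finite order; (b) Y has finite structural dimension; (c) Y is ultrametric. Suppose f : X → Y is Borel measurable and satisfies Luzin's condition (N) in the sense that μ(N) = 0 implies H^h(f(N)) = 0 for every N ⊆ X. Then f(X) is σ-finite with respect to H^h. -/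
open MeasureTheory Set Filter Topology
open scoped NNReal ENNReal

universe u v

lemma aux_half {Y : Type*} [MeasurableSpace Y] [StandardBorelSpace Y] (κ : Measure Y)
    [IsFiniteMeasure κ] (hκ : ∀ y, κ {y} = 0) (P : Set Y) (hP : MeasurableSet P) :
    ∃ E ⊆ P, MeasurableSet E ∧ 2 * κ E = κ P := by
  classical
  obtain ⟨φ, hφ⟩ := MeasureTheory.exists_measurableEmbedding_real Y
  set ρ : Measure ℝ := (κ.restrict P).map φ with hρ
  have hρa : ∀ s, MeasurableSet s → ρ s = κ (φ ⁻¹' s ∩ P) := by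
    intro s hs
    rw [hρ, Measure.map_apply hφ.measurable hs, Measure.restrict_apply (hφ.measurable hs)]
  have : IsFiniteMeasure ρ := by rw [hρ]; infer_instance
  have : NullSingletonClass ρ := by
    constructor
    intro x
    rw [hρa _ (measurableSet_singleton x)]
    have : (φ ⁻¹' {x}).Subsingleton := by
      intro a ha b hb
      exact hφ.injective (by rw [ha, hb])
    rcases this.eq_empty_or_singleton with h | ⟨y, h⟩
    · simp [h]
    · exact measure_mono_null inter_subset_left (by rw [h]; exact hκ y)
  have hcont : Continuous (fun b : ℝ => ρ.real (Iic b)) := by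
    have h1 : Continuous (fun b : ℝ => ∫ x in (0:ℝ)..b, (1:ℝ) ∂ρ) :=
      intervalIntegral.continuous_primitive (fun a b => by
        exact (integrable_const (1:ℝ)).intervalIntegrable) 0
    have h2 : (fun b : ℝ => ρ.real (Iic b)) =
        fun b => (∫ x in (0:ℝ)..b, (1:ℝ) ∂ρ) + ρ.real (Iic 0) := by
      funext b
      rw [← intervalIntegral.integral_Iic_sub_Iic (integrable_const (1:ℝ)).integrableOn
        (integrable_const (1:ℝ)).integrableOn]
      simp
    rw [h2]
    exact h1.add continuous_const
  have htop : Tendsto (fun b : ℝ => ρ.real (Iic b)) atTop (𝓝 (ρ.real univ)) := by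
    have := tendsto_measure_Iic_atTop ρ
    exact (ENNReal.tendsto_toReal (measure_ne_top _ _)).comp this
  have hbot : Tendsto (fun b : ℝ => ρ.real (Iic b)) atBot (𝓝 0) := by
    have := tendsto_measure_iInter_atBot (μ := ρ) (s := fun b : ℝ => Iic b)
      (fun i => measurableSet_Iic.nullMeasurableSet) monotone_Iic ⟨0, measure_ne_top _ _⟩
    rw [iInter_Iic_eq_empty_iff.2 (by simp [not_bddBelow_univ]), measure_empty] at this
    exact (ENNReal.tendsto_toReal (by simp)).comp this
  have huniv : ρ univ = κ P := by rw [hρa _ MeasurableSet.univ]; simp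
  by_cases hz : κ P = 0
  · exact ⟨∅, empty_subset _, MeasurableSet.empty, by simp [hz]⟩
  have hpos : 0 < ρ.real univ := by
    rw [measureReal_def, huniv]
    exact ENNReal.toReal_pos hz (measure_ne_top _ _)
  obtain ⟨b, hb⟩ := mem_range_of_exists_le_of_exists_ge hcont
    (c := ρ.real univ / 2)
    ((hbot.eventually (ge_mem_nhds (by linarith : (0:ℝ) < ρ.real univ / 2))).exists)
    ((htop.eventually (le_mem_nhds (by linarith : ρ.real univ / 2 < ρ.real univ))).exists)
  refine ⟨φ ⁻¹' Iic b ∩ P, inter_subset_right, (hφ.measurable measurableSet_Iic).inter hP, ?_⟩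
  rw [← hρa _ measurableSet_Iic, ← huniv]
  rw [← ENNReal.toReal_eq_toReal_iff' (by finiteness) (by finiteness)]
  simp only [measureReal_def] at hb
  simp only [ENNReal.toReal_mul, ENNReal.toReal_ofNat]
  linarith

lemma aux_step {Y : Type*} [MetricSpace Y] [CompleteSpace Y]
    [TopologicalSpace.SeparableSpace Y] [MeasurableSpace Y] [BorelSpace Y] (κ : Measure Y)
    [IsFiniteMeasure κ] (hκ : ∀ y, κ {y} = 0) (K : TopologicalSpace.Compacts Y)
    (δ : ℝ) (hδ : 0 < δ) (ε : ℝ≥0∞) (hε : ε ≠ 0) :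
    ∃ K' : TopologicalSpace.Compacts Y, (K' : Set Y) ⊆ K ∧ κ K ≤ 2 * κ K' + ε ∧
      ∀ U : Set Y, 2 * κ (K' ∩ U) ≤ κ (K ∩ Metric.cthickening δ U) := by
  classical
  have : SecondCountableTopology Y := UniformSpace.secondCountable_of_separable Y
  have : PolishSpace Y := inferInstance
  rcases isEmpty_or_nonempty Y with hY | hY
  · exact ⟨K, subset_rfl, by
      have : (K : Set Y) = ∅ := Set.eq_empty_of_isEmpty _
      simp [this], fun U => by
      have : (K : Set Y) = ∅ := Set.eq_empty_of_isEmpty _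
      simp [this]⟩
  set q := TopologicalSpace.denseSeq Y
  set B : ℕ → Set Y := fun n => Metric.ball (q n) (δ / 2) with hB
  set P : ℕ → Set Y := fun n => (K : Set Y) ∩ disjointed B n with hP
  have hKm : MeasurableSet (K : Set Y) := K.isCompact.isClosed.measurableSet
  have hPm : ∀ n, MeasurableSet (P n) := fun n =>
    hKm.inter (MeasurableSet.disjointed (fun n => Metric.isOpen_ball.measurableSet) n)
  have hPd : Pairwise (Function.onFun Disjoint P) := fun i j hij =>
    (disjoint_disjointed B hij).mono inter_subset_right inter_subset_right
  have hPU : ⋃ n, P n = K := by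
    rw [hP, ← inter_iUnion, iUnion_disjointed]
    apply inter_eq_left.2
    intro x _
    obtain ⟨n, hn⟩ := Metric.denseRange_iff.1 (TopologicalSpace.denseRange_denseSeq Y) x (δ/2) (by linarith)
    exact mem_iUnion.2 ⟨n, hn⟩
  choose E hEP hEm hE using fun n => aux_half κ hκ (P n) (hPm n)
  have hEd : Pairwise (Function.onFun Disjoint E) := fun i j hij =>
    (hPd hij).mono (hEP i) (hEP j)
  have hEU : 2 * κ (⋃ n, E n) = κ K := by
    rw [measure_iUnion hEd hEm, ← ENNReal.tsum_mul_left, ← hPU, measure_iUnion hPd hPm]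
    simp_rw [hE]
  obtain ⟨K', hK'E, hK'c, hK'⟩ := (MeasurableSet.iUnion hEm).exists_isCompact_lt_add
    (measure_ne_top κ _) (ε := ε / 2) (by simpa using hε)
  refine ⟨⟨K', hK'c⟩, ?_, ?_, ?_⟩
  · refine hK'E.trans ?_
    rw [← hPU]
    exact iUnion_mono hEP
  · rw [← hEU]
    calc 2 * κ (⋃ n, E n) ≤ 2 * (κ K' + ε / 2) := by gcongr
      _ = 2 * κ K' + ε := by
        rw [mul_add, ENNReal.mul_div_cancel (by simp) (by simp)]
      _ = _ := rfl
  · intro U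
    set J : Set ℕ := {n | (P n ∩ U).Nonempty}
    have h1 : K' ∩ U ⊆ ⋃ n ∈ J, E n := by
      rintro x ⟨hx, hxU⟩
      obtain ⟨n, hn⟩ := mem_iUnion.1 (hK'E hx)
      exact mem_biUnion (show n ∈ J from ⟨x, hEP n hn, hxU⟩) hn
    have h2 : ⋃ n ∈ J, P n ⊆ K ∩ Metric.cthickening δ U := by
      intro x hx
      obtain ⟨n, hn, hxn⟩ := mem_iUnion₂.1 hx
      refine ⟨hxn.1, ?_⟩
      obtain ⟨y, hyP, hyU⟩ := hn
      apply Metric.thickening_subset_cthickening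
      rw [Metric.mem_thickening_iff]
      refine ⟨y, hyU, ?_⟩
      have a1 := disjointed_subset B n hxn.2
      have a2 := disjointed_subset B n hyP.2
      simp only [hB, Metric.mem_ball] at a1 a2
      calc dist x y ≤ dist x (q n) + dist y (q n) := dist_triangle_right _ _ _
        _ < δ := by linarith
    calc 2 * κ (K' ∩ U) ≤ 2 * κ (⋃ n ∈ J, E n) := by gcongr
      _ = 2 * ∑' n : J, κ (E n) := by
        rw [measure_biUnion (to_countable J) (fun i _ j _ hij => hEd hij) (fun i _ => hEm i)]
      _ = ∑' n : J, κ (P n) := by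
        rw [← ENNReal.tsum_mul_left]; simp_rw [hE]
      _ = κ (⋃ n ∈ J, P n) := by
        rw [measure_biUnion (to_countable J) (fun i _ j _ hij => hPd hij) (fun i _ => hPm i)]
      _ ≤ _ := measure_mono h2

lemma aux_cover {Y : Type*} [MetricSpace Y] (h : ℝ≥0 → ℝ≥0∞) (L : Set Y)
    (hL : hausdorffM h L = 0) (r : ℝ≥0∞) (hr : 0 < r) (c : ℝ≥0∞) (hc : 0 < c) :
    ∃ t : ℕ → Set Y, L ⊆ ⋃ n, t n ∧ (∀ n, Metric.ediam (t n) ≤ r) ∧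
      ∑' n, (⨆ _ : (t n).Nonempty, h (Metric.ediam (t n)).toNNReal) < c := by
  borelize Y
  have h1 : hausdorffM h L = Measure.mkMetric (fun d => h d.toNNReal) L := by
    rw [← OuterMeasure.coe_mkMetric]; rfl
  rw [h1, Measure.mkMetric_apply] at hL
  have h2 := (iSup₂_le_iff.1 hL.le) r hr
  have h3 := lt_of_le_of_lt h2 hc
  simp only [iInf_lt_iff] at h3
  obtain ⟨t, ht, ht', h4⟩ := h3
  exact ⟨t, ht, ht', h4⟩

lemma aux_eta (h : ℝ≥0 → ℝ≥0∞) (hcont : Continuous h) (a b : ℝ≥0)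
    (hfin : ∀ d, a ≤ d → d ≤ b → h d ≠ 0 ∧ h d ≠ ⊤) (hm : Monotone h) :
    ∃ η : ℝ≥0, 0 < η ∧ ∀ d, a ≤ d → d ≤ b → h (d + 2 * η) ≤ 2 * h d := by
  let U : ℕ → Set ℝ≥0 := fun k => {d | h (d + 2 * (1 / (k + 1 : ℝ≥0))) < 2 * h d}
  have hU : ∀ k, IsOpen (U k) := fun k =>
    isOpen_lt (hcont.comp (by fun_prop)) (ENNReal.continuous_const_mul (by simp) |>.comp hcont)
  have hmono : Monotone U := by
    intro i j hij d hd
    refine lt_of_le_of_lt (hm ?_) hd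
    gcongr
  have hcov : Icc a b ⊆ ⋃ k, U k := by
    intro d hd
    obtain ⟨h1, h2⟩ := hfin d hd.1 hd.2
    have hlt : h d < 2 * h d := by
      rw [two_mul]; exact ENNReal.lt_add_right h2 h1
    have ht : Tendsto (fun k : ℕ => h (d + 2 * (1 / (k + 1 : ℝ≥0)))) atTop (𝓝 (h d)) := by
      refine (hcont.tendsto d).comp ?_
      have := (tendsto_one_div_add_atTop_nhds_zero_nat (𝕜 := ℝ≥0)).const_mul 2 |>.const_add d
      simpa using this
    obtain ⟨k, hk⟩ := (ht.eventually (gt_mem_nhds hlt)).exists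
    exact mem_iUnion.2 ⟨k, hk⟩
  obtain ⟨k, hk⟩ := isCompact_Icc.elim_directed_cover U hU hcov hmono.directed_le
  exact ⟨1 / (k + 1), by positivity, fun d h1 h2 => (hk ⟨h1, h2⟩).le⟩

lemma aux_tau (η : ℕ → ℝ≥0) (hη : ∀ n, 0 < η n) :
    ∃ τ : ℕ → ℝ≥0, (∀ n, 0 < τ n) ∧ (∀ n, τ (n + 1) < τ n) ∧ ∀ n, τ n ≤ η n := by
  let τ : ℕ → ℝ≥0 := fun n => Nat.rec (η 0) (fun n t => min (t / 2) (η (n + 1))) n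
  have hs : ∀ n, τ (n + 1) = min (τ n / 2) (η (n + 1)) := fun n => rfl
  have hp : ∀ n, 0 < τ n := by
    intro n
    induction n with
    | zero => exact hη 0
    | succ n ih => rw [hs]; exact lt_min (half_pos ih) (hη _)
  refine ⟨τ, hp, fun n => ?_, fun n => ?_⟩
  · rw [hs]; exact lt_of_le_of_lt (min_le_left _ _) (NNReal.half_lt_self (hp n).ne')
  · cases n with
    | zero => exact le_rfl
    | succ n => rw [hs]; exact min_le_right _ _

lemma aux_core {Y : Type*} [MetricSpace Y] [CompleteSpace Y]
    [TopologicalSpace.SeparableSpace Y] [MeasurableSpace Y] [BorelSpace Y] (κ : Measure Y)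
    [IsFiniteMeasure κ] (h : ℝ≥0 → ℝ≥0∞) (hh : IsHausdorffFunction h) (hcont : Continuous h)
    (h0 : h 0 = 0) (K : Set Y) (hK : IsCompact K) (hK0 : κ K ≠ 0)
    (hκ : ∀ n : ℕ, ∃ ρ : ℝ≥0, 0 < ρ ∧ ∀ (U : Set Y) (d : ℝ≥0), Metric.ediam U ≤ d → d ≤ ρ →
      2 ^ n * κ U ≤ h d) :
    ∃ L ⊆ K, IsCompact L ∧ κ L = 0 ∧ hausdorffM h L ≠ 0 := by
  have hpt : ∀ y, κ {y} = 0 := by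
    intro y
    obtain ⟨ρ, hρ, H⟩ := hκ 0
    have := H {y} 0 (by simp) (zero_le)
    simpa [h0] using this
  obtain ⟨c₁, hc₁, hc₁f⟩ : ∃ c₁ : ℝ≥0, 0 < c₁ ∧ h c₁ < ⊤ := by
    have h1 : ∀ᶠ x in 𝓝 (0 : ℝ≥0), h x < ⊤ :=
      (hcont.tendsto 0).eventually (gt_mem_nhds (by rw [h0]; exact ENNReal.zero_lt_top))
    have h2 : ∀ᶠ x in 𝓝[>] (0 : ℝ≥0), h x < ⊤ := h1.filter_mono nhdsWithin_le_nhds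
    obtain ⟨x, hx, hx'⟩ := (h2.and self_mem_nhdsWithin).exists
    exact ⟨x, hx', hx⟩
  choose ρ hρ hρU using hκ
  set s : ℕ → ℝ≥0 := fun n => min (min (ρ n / 2) (c₁ / 2)) (1 / (n + 1)) with hs
  have hs0 : ∀ n, 0 < s n := fun n =>
    lt_min (lt_min (half_pos (hρ n)) (half_pos hc₁)) (by positivity)
  have hsρ : ∀ n, 2 * s n ≤ ρ n := fun n => by
    have : s n ≤ ρ n / 2 := (min_le_left _ _).trans (min_le_left _ _)
    calc 2 * s n ≤ 2 * (ρ n / 2) := by gcongr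
      _ = ρ n := by rw [mul_div_cancel₀ _ (by norm_num)]
  have hsc : ∀ n, s n ≤ c₁ := fun n => by
    have : s n ≤ c₁ / 2 := (min_le_left _ _).trans (min_le_right _ _)
    exact this.trans (half_le_self hc₁.le)
  have hslim : ∀ d : ℝ≥0, 0 < d → ∃ n, s (n + 1) ≤ d := by
    intro d hd
    obtain ⟨n, hn⟩ := ((tendsto_one_div_add_atTop_nhds_zero_nat (𝕜 := ℝ≥0)).eventually
      (ge_mem_nhds hd)).exists
    refine ⟨n, (min_le_right _ _).trans (le_trans ?_ hn)⟩
    push_cast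
    gcongr
    simp
  have hη : ∀ n, ∃ η : ℝ≥0, 0 < η ∧ ∀ d, s (n + 1) ≤ d → d ≤ s n → h (d + 2 * η) ≤ 2 * h d := by
    intro n
    refine aux_eta h hcont _ _ (fun d h1 h2 => ⟨(hh.pos d ((hs0 _).trans_le h1)).ne', ?_⟩) hh.mono
    exact ((hh.mono (h2.trans (hsc n))).trans_lt hc₁f).ne
  choose η hη0 hη using hη
  obtain ⟨τ, hτ0, hτs, hτη⟩ := aux_tau (fun n => min (η n) (s n / 2))
    (fun n => lt_min (hη0 n) (half_pos (hs0 n)))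
  obtain ⟨e, he0, hes⟩ := ENNReal.exists_pos_sum_of_countable' (ε := κ K / 2)
    (by simpa using hK0) ℕ
  have step := fun (n : ℕ) (K : TopologicalSpace.Compacts Y) =>
    aux_step κ hpt K ((τ n : ℝ) - τ (n + 1))
      (by have := hτs n; rw [sub_pos]; exact_mod_cast this) (e n / 2 ^ n)
      (by simp [(he0 n).ne'])
  choose F hF1 hF2 hF3 using step
  obtain ⟨KK, hKKz, hKKs⟩ : ∃ KK : ℕ → TopologicalSpace.Compacts Y, KK 0 = ⟨K, hK⟩ ∧
      ∀ n, KK (n + 1) = F n (KK n) :=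
    ⟨fun n => Nat.rec ⟨K, hK⟩ (fun n C => F n C) n, rfl, fun n => rfl⟩
  have hKK0 : (KK 0 : Set Y) = K := by rw [hKKz]; rfl
  have hKanti : Antitone (fun n => (KK n : Set Y)) := antitone_nat_of_succ_le fun n => by
    rw [hKKs]; exact hF1 _ _
  -- mass lower bound
  have hmass : ∀ n, κ K ≤ 2 ^ n * κ (KK n) + ∑ i ∈ Finset.range n, e i := by
    intro n
    induction n with
    | zero => simp [hKK0]
    | succ n ih =>
      refine ih.trans ?_
      rw [Finset.sum_range_succ, hKKs]
      calc 2 ^ n * κ (KK n) + ∑ i ∈ Finset.range n, e i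
          ≤ 2 ^ n * (2 * κ (F n (KK n)) + e n / 2 ^ n) + ∑ i ∈ Finset.range n, e i := by
            gcongr; exact hF2 _ _
        _ = _ := by
            rw [mul_add, ENNReal.mul_div_cancel (by simp) (by simp)]
            ring
  have hmass' : ∀ n, κ K / 2 ≤ 2 ^ n * κ (KK n) := by
    intro n
    have h1 : κ K ≤ 2 ^ n * κ (KK n) + κ K / 2 :=
      (hmass n).trans (by gcongr; exact (ENNReal.sum_le_tsum _).trans hes.le)
    have h2 : κ K / 2 + κ K / 2 ≤ 2 ^ n * κ (KK n) + κ K / 2 := by rwa [ENNReal.add_halves]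
    exact (ENNReal.add_le_add_iff_right (ENNReal.div_ne_top (measure_ne_top _ _) (by simp))).1 h2
  -- comparison
  have hcomp : ∀ n k (U : Set Y), 2 ^ (n + k) * κ (KK (n + k) ∩ U) ≤
      2 ^ n * κ (KK n ∩ Metric.cthickening ((τ n : ℝ) - τ (n + k)) U) := by
    intro n k
    have hle : ∀ k, (τ (n + k) : ℝ) ≤ τ n := fun k => by
      exact_mod_cast (antitone_nat_of_succ_le fun n => (hτs n).le : Antitone τ) (Nat.le_add_right n k)
    induction k with
    | zero =>
      intro U
      simp only [add_zero, sub_self]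
      gcongr
      exact Metric.self_subset_cthickening _
    | succ k ih =>
      intro U
      have h1 := hF3 (n + k) (KK (n + k)) U
      rw [← hKKs] at h1
      have hd : (0:ℝ) ≤ (τ (n + k) : ℝ) - τ (n + k + 1) := by
        have := (hτs (n + k)).le; rw [sub_nonneg]; exact_mod_cast this
      calc 2 ^ (n + (k + 1)) * κ (KK (n + (k + 1)) ∩ U)
          = 2 ^ (n + k) * (2 * κ (KK (n + k + 1) ∩ U)) := by
            rw [← add_assoc, pow_succ, mul_assoc]
        _ ≤ 2 ^ (n + k) * κ (KK (n + k) ∩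
              Metric.cthickening ((τ (n + k) : ℝ) - τ (n + k + 1)) U) := by gcongr
        _ ≤ 2 ^ n * κ (KK n ∩ Metric.cthickening ((τ n : ℝ) - τ (n + k))
              (Metric.cthickening ((τ (n + k) : ℝ) - τ (n + k + 1)) U)) := ih _
        _ ≤ _ := by
            gcongr
            refine (Metric.cthickening_cthickening_subset (sub_nonneg.2 (hle k)) hd U).trans ?_
            apply Metric.cthickening_mono
            rw [← add_assoc]
            linarith
  have hbound : ∀ (U : Set Y) (d : ℝ≥0), 0 < d → d ≤ s 0 → Metric.ediam U ≤ d →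
      ∀ᶠ m in atTop, 2 ^ m * κ (KK m ∩ U) ≤ 2 * h d := by
    intro U d hd hds hU
    classical
    obtain ⟨n, hn1, hn2⟩ : ∃ n, s (n + 1) ≤ d ∧ d ≤ s n := by
      have hex := hslim d hd
      refine ⟨Nat.find hex, Nat.find_spec hex, ?_⟩
      rcases hfi : Nat.find hex with _ | j
      · exact hds
      · exact (not_le.1 (Nat.find_min hex (m := j) (by omega))).le
    filter_upwards [eventually_ge_atTop n] with m hm
    obtain ⟨k, rfl⟩ := Nat.exists_eq_add_of_le hm
    have hτ1 : τ n ≤ η n := (hτη n).trans (min_le_left _ _)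
    have hτ2 : τ n ≤ s n / 2 := (hτη n).trans (min_le_right _ _)
    calc 2 ^ (n + k) * κ (KK (n + k) ∩ U)
        ≤ 2 ^ n * κ (KK n ∩ Metric.cthickening ((τ n : ℝ) - τ (n + k)) U) := hcomp n k U
      _ ≤ 2 ^ n * κ (Metric.cthickening (τ n : ℝ) U) := by
          gcongr
          refine inter_subset_right.trans (Metric.cthickening_mono ?_ _)
          simp
      _ ≤ h (d + 2 * τ n) := by
          apply hρU
          · refine (Metric.ediam_cthickening_le _).trans ?_
            push_cast
            gcongr
          · refine le_trans ?_ (hsρ n)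
            rw [two_mul (s n)]
            gcongr
            calc 2 * τ n ≤ 2 * (s n / 2) := by gcongr
              _ = s n := by rw [mul_div_cancel₀ _ (by norm_num)]
      _ ≤ h (d + 2 * η n) := hh.mono (by gcongr)
      _ ≤ 2 * h d := hη n d hn1 hn2
  have hclosed : ∀ n, IsClosed (KK n : Set Y) := fun n => (KK n).isCompact.isClosed
  refine ⟨⋂ n, (KK n : Set Y), (iInter_subset _ 0).trans hKK0.le, ?_, ?_, ?_⟩
  · exact (KK 0).isCompact.of_isClosed_subset (isClosed_iInter hclosed) (iInter_subset _ 0)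
  · have h1 : ∀ n : ℕ, κ (⋂ n, (KK n : Set Y)) ≤ κ univ / 2 ^ n := by
      intro n
      rw [ENNReal.le_div_iff_mul_le (by simp) (by simp), mul_comm]
      calc 2 ^ n * κ (⋂ n, (KK n : Set Y)) ≤ 2 ^ (0 + n) * κ (KK (0 + n) ∩ univ) := by
            simp only [zero_add, inter_univ]
            gcongr
            exact iInter_subset _ n
        _ ≤ _ := hcomp 0 n univ
        _ ≤ κ univ := by
            simp only [pow_zero, one_mul]
            exact measure_mono (subset_univ _)
    have h2 : Tendsto (fun n : ℕ => κ univ / 2 ^ n) atTop (𝓝 0) := by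
      have := ENNReal.Tendsto.const_mul (a := κ univ)
        (ENNReal.tendsto_pow_atTop_nhds_zero_of_lt_one (r := 2⁻¹) (by simp)) (Or.inr (measure_ne_top κ univ))
      simpa [div_eq_mul_inv, ENNReal.inv_pow] using this
    exact le_antisymm (ge_of_tendsto' h2 h1) zero_le
  · intro hzero
    have hc16 : 0 < κ K / 16 := ENNReal.div_pos hK0 (by simp)
    obtain ⟨t, htL, htd, hts⟩ := aux_cover h _ hzero ((s 0 / 2 : ℝ≥0) : ℝ≥0∞)
      (by exact_mod_cast half_pos (hs0 0)) (κ K / 16) hc16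
    obtain ⟨e', he0', hes'⟩ := ENNReal.exists_pos_sum_of_countable' (ε := κ K / 16) hc16.ne' ℕ
    set a : ℕ → ℝ≥0∞ := fun n => ⨆ _ : (t n).Nonempty, h (Metric.ediam (t n)).toNNReal with ha
    have hV : ∀ i, ∃ V : Set Y, IsOpen V ∧ t i ⊆ V ∧
        ∀ᶠ m in atTop, 2 ^ m * κ (KK m ∩ V) ≤ 2 * (a i + e' i) := by
      intro i
      rcases (t i).eq_empty_or_nonempty with hti | hti
      · exact ⟨∅, isOpen_empty, hti.le, by simp⟩
      have hne : Metric.ediam (t i) ≠ ⊤ := ((htd i).trans_lt ENNReal.coe_lt_top).ne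
      set D := (Metric.ediam (t i)).toNNReal with hD
      have hDc : (D : ℝ≥0∞) = Metric.ediam (t i) := ENNReal.coe_toNNReal hne
      have hDs : D ≤ s 0 / 2 := by
        have := htd i; rw [← hDc] at this; exact_mod_cast this
      have haD : a i = h D := by simp [ha, hti]; rfl
      have hfinD : h D ≠ ⊤ :=
        ((hh.mono ((hDs.trans (half_le_self (hs0 0).le)).trans (hsc 0))).trans_lt hc₁f).ne
      have hlt : h D < h D + e' i := ENNReal.lt_add_right hfinD (he0' i).ne'
      have ht : Tendsto (fun x : ℝ≥0 => h (D + 2 * x)) (𝓝[>] 0) (𝓝 (h D)) := by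
        have : Continuous (fun x : ℝ≥0 => h (D + 2 * x)) := hcont.comp (by fun_prop)
        have := this.tendsto 0
        simp only [mul_zero, add_zero] at this
        exact this.mono_left nhdsWithin_le_nhds
      have hsm : ∀ᶠ x : ℝ≥0 in 𝓝[>] 0, x < s 0 / 4 :=
        (gt_mem_nhds (by have := hs0 0; positivity)).filter_mono nhdsWithin_le_nhds
      obtain ⟨x, ⟨hx1, hx2⟩, hx3⟩ := (((ht.eventually (gt_mem_nhds hlt)).and hsm).and
        self_mem_nhdsWithin).exists
      replace hx3 : 0 < x := hx3
      refine ⟨Metric.thickening x (t i), Metric.isOpen_thickening,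
        Metric.self_subset_thickening (by exact_mod_cast hx3) _, ?_⟩
      have := hbound (Metric.thickening x (t i)) (D + 2 * x) (by positivity) ?_ ?_
      · filter_upwards [this] with m hm
        refine hm.trans ?_
        rw [haD]
        gcongr
      · rw [← NNReal.coe_le_coe] at *
        rw [← NNReal.coe_lt_coe] at hx2
        push_cast at *
        linarith
      · refine (Metric.ediam_thickening_le x).trans ?_
        push_cast
        rw [hDc]
    choose V hVo hVt hVb using hV
    have hLV : (⋂ n, (KK n : Set Y)) ⊆ ⋃ i, V i := htL.trans (iUnion_mono hVt)
    obtain ⟨n, hn⟩ := exists_subset_nhds_of_isCompact' hKanti.directed_ge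
      (fun n => (KK n).isCompact) hclosed
      (fun x hx => (isOpen_iUnion hVo).mem_nhds (hLV hx))
    obtain ⟨I, hI⟩ := (KK n).isCompact.elim_finite_subcover V hVo hn
    have hev : ∀ᶠ m in atTop, ∀ i ∈ I, 2 ^ m * κ (KK m ∩ V i) ≤ 2 * (a i + e' i) :=
      (Filter.eventually_all_finset I).2 fun i _ => hVb i
    obtain ⟨m, hm1, hm2⟩ := (hev.and (eventually_ge_atTop n)).exists
    have hsub : (KK m : Set Y) ⊆ ⋃ i ∈ I, ((KK m : Set Y) ∩ V i) := by
      intro x hx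
      obtain ⟨i, hi, hxi⟩ := mem_iUnion₂.1 (hI (hKanti hm2 hx))
      exact mem_iUnion₂.2 ⟨i, hi, hx, hxi⟩
    have hfinal : κ K / 2 ≤ κ K / 4 := by
      calc κ K / 2 ≤ 2 ^ m * κ (KK m) := hmass' m
        _ ≤ 2 ^ m * ∑ i ∈ I, κ (KK m ∩ V i) := by
            gcongr
            exact (measure_mono hsub).trans (measure_biUnion_finset_le _ _)
        _ = ∑ i ∈ I, 2 ^ m * κ (KK m ∩ V i) := Finset.mul_sum _ _ _
        _ ≤ ∑ i ∈ I, 2 * (a i + e' i) := Finset.sum_le_sum hm1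
        _ = 2 * (∑ i ∈ I, a i + ∑ i ∈ I, e' i) := by
            rw [← Finset.mul_sum, Finset.sum_add_distrib]
        _ ≤ 2 * (κ K / 16 + κ K / 16) := by
            gcongr
            · exact (ENNReal.sum_le_tsum _).trans hts.le
            · exact (ENNReal.sum_le_tsum _).trans hes'.le
        _ = κ K / 4 := by
            rw [← two_mul, ← mul_assoc, div_eq_mul_inv, div_eq_mul_inv, mul_comm, mul_assoc]
            congr 1
            rw [show (16 : ℝ≥0∞) = 4 * 4 by norm_num, ENNReal.mul_inv (by simp) (by simp),
              show (2 * 2 : ℝ≥0∞) = 4 by norm_num, mul_assoc,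
              ENNReal.inv_mul_cancel (by simp) (by simp), mul_one]
    have hfinal' := ENNReal.toReal_mono (ENNReal.div_ne_top (measure_ne_top _ _) (by simp)) hfinal
    simp only [ENNReal.toReal_div, ENNReal.toReal_ofNat] at hfinal'
    have := ENNReal.toReal_pos hK0 (measure_ne_top _ _)
    linarith

lemma aux_ediam {Y : Type*} [MetricSpace Y] (s : Set Y) (d : ℝ≥0)
    (hs : ∀ y ∈ s, ∀ z ∈ s, dist y z ≤ d) : Metric.ediam s ≤ d := by
  refine Metric.ediam_le fun y hy z hz => ?_
  rw [edist_nndist]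
  exact_mod_cast hs y hy z hz

lemma aux_fin (h : ℝ≥0 → ℝ≥0∞) (hcont : Continuous h) (h0 : h 0 = 0) :
    ∃ c₁ : ℝ≥0, 0 < c₁ ∧ h c₁ < ⊤ := by
  have h1 : ∀ᶠ x in 𝓝 (0 : ℝ≥0), h x < ⊤ :=
    (hcont.tendsto 0).eventually (gt_mem_nhds (by rw [h0]; exact ENNReal.zero_lt_top))
  have h2 : ∀ᶠ x in 𝓝[>] (0 : ℝ≥0), h x < ⊤ := h1.filter_mono nhdsWithin_le_nhds
  obtain ⟨x, hx, hx'⟩ := (h2.and self_mem_nhdsWithin).exists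
  exact ⟨x, hx', hx⟩

/-- The covering property extracted from each of the three alternatives. -/
def AuxCov {Y : Type*} [MetricSpace Y] (h : ℝ≥0 → ℝ≥0∞) : Prop :=
  ∃ (N : ℕ) (M : ℝ≥0∞) (δ₀ : ℝ≥0), M ≠ ⊤ ∧ 0 < δ₀ ∧ ∀ δ : ℝ≥0, δ ≤ δ₀ →
    ∀ t : Set (Y × ℝ≥0), (∀ a ∈ t, 0 < a.2 ∧ a.2 ≤ δ) →
    ∃ u ⊆ t, u.PairwiseDisjoint (fun a => Metric.ball a.1 (a.2 : ℝ)) ∧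
      ∃ U : Y × ℝ≥0 → Fin N → Set Y,
        (∀ b ∈ u, ∀ i, Metric.ediam (U b i) ≤ 10 * δ ∧
          h (Metric.ediam (U b i)).toNNReal ≤ M * h b.2) ∧
        ∀ a ∈ t, ∃ b ∈ u, ∃ i, a.1 ∈ U b i

lemma aux_cov_local {Y : Type*} [MetricSpace Y] (h : ℝ≥0 → ℝ≥0∞)
    (H : ∃ (N : ℕ) (M : ℝ≥0∞) (δ₀ : ℝ≥0), M ≠ ⊤ ∧ 0 < δ₀ ∧ ∀ (x : Y) (r : ℝ≥0), 0 < r → r ≤ δ₀ →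
      ∃ U : Fin N → Set Y, Metric.closedBall x (5 * r : ℝ) ⊆ ⋃ i, U i ∧
        ∀ i, Metric.ediam (U i) ≤ 10 * r ∧ h (Metric.ediam (U i)).toNNReal ≤ M * h r) :
    AuxCov (Y := Y) h := by
  obtain ⟨N, M, δ₀, hM, hδ₀, H⟩ := H
  refine ⟨N, M, δ₀, hM, hδ₀, fun δ hδ t ht => ?_⟩
  obtain ⟨u, hut, hud, hu⟩ := Vitali.exists_disjoint_subfamily_covering_enlargement_closedBall t
    (fun a => a.1) (fun a => (a.2 : ℝ)) δ (fun a ha => by exact_mod_cast (ht a ha).2) 5 (by norm_num)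
  refine ⟨u, hut, fun a ha b hb hab => (hud ha hb hab).mono Metric.ball_subset_closedBall
    Metric.ball_subset_closedBall, ?_⟩
  choose! U hU1 hU2 using H
  refine ⟨fun b => U b.1 b.2, fun b hb i => ?_, fun a ha => ?_⟩
  · obtain ⟨h1, h2⟩ := ht b (hut hb)
    obtain ⟨h3, h4⟩ := hU2 b.1 b.2 h1 (h2.trans hδ) i
    refine ⟨h3.trans (by gcongr), h4⟩
  · obtain ⟨b, hb, hab⟩ := hu a ha
    obtain ⟨h1, h2⟩ := ht b (hut hb)
    have h3 : a.1 ∈ ⋃ i, U b.1 b.2 i := hU1 b.1 b.2 h1 (h2.trans hδ)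
      (hab (Metric.mem_closedBall_self (by positivity)))
    obtain ⟨i, hi⟩ := mem_iUnion.1 h3
    exact ⟨b, hb, i, hi⟩

lemma aux_ball5 {Y : Type*} [MetricSpace Y] (x : Y) (r : ℝ≥0) :
    Metric.ediam (Metric.closedBall x (5 * r : ℝ)) ≤ ((10 * r : ℝ≥0) : ℝ≥0∞) := by
  refine aux_ediam _ _ fun y hy z hz => ?_
  rw [Metric.mem_closedBall] at hy hz
  push_cast
  linarith [dist_triangle_right y z x]

lemma aux_cov {Y : Type*} [MetricSpace Y] (h : ℝ≥0 → ℝ≥0∞) (hh : IsHausdorffFunction h)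
    (hcont : Continuous h) (h0 : h 0 = 0)
    (halt : FiniteOrder h ∨ FiniteStructuralDim Y ∨
      ∀ x y z : Y, dist x z ≤ max (dist x y) (dist y z)) : AuxCov (Y := Y) h := by
  obtain ⟨c₁, hc₁, hc₁f⟩ := aux_fin h hcont h0
  rcases halt with hfo | hfs | hum
  · apply aux_cov_local
    obtain ⟨M, hM1, hM2⟩ := exists_between hfo
    have hev := eventually_lt_of_limsup_lt hM1
    obtain ⟨ε, hε, hεs⟩ := (mem_nhdsGT_iff_exists_Ioo_subset).1 hev
    replace hε : 0 < ε := hε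
    have key : ∀ t : ℝ≥0, 0 < t → t < ε → t ≤ c₁ → h (3 * t) ≤ M * h t := by
      intro t h1 h2 h3
      have : h (3 * t) / h t < M := hεs ⟨h1, h2⟩
      exact (ENNReal.div_le_iff (hh.pos t h1).ne' ((hh.mono h3).trans_lt hc₁f).ne).1 this.le
    refine ⟨1, M * (M * M), min ε c₁ / 10, by finiteness, by positivity, fun x r hr hr' => ?_⟩
    have hr1 : 10 * r ≤ min ε c₁ := by
      rw [mul_comm]; exact (le_div_iff₀ (by norm_num)).1 hr'
    have hlt : 9 * r < 10 * r := by gcongr; norm_num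
    refine ⟨fun _ => Metric.closedBall x (5 * r : ℝ), by simp [iUnion_const], fun i => ⟨?_, ?_⟩⟩
    · exact_mod_cast aux_ball5 x r
    · have h1 : (Metric.ediam (Metric.closedBall x (5 * r : ℝ))).toNNReal ≤ 3 * (3 * (3 * r)) := by
        have := ENNReal.toNNReal_mono ENNReal.coe_ne_top (aux_ball5 x r)
        rw [ENNReal.toNNReal_coe] at this
        refine this.trans ?_
        rw [← mul_assoc, ← mul_assoc]
        gcongr
        norm_num
      have e9 : 3 * (3 * r) = 9 * r := by rw [← mul_assoc]; norm_num
      have e1 : 9 * r ≤ min ε c₁ := hlt.le.trans hr1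
      have l9 : 9 * r < ε := (hlt.trans_le hr1).trans_le (min_le_left _ _)
      have l9' : 9 * r ≤ c₁ := e1.trans (min_le_right _ _)
      have l3 : 3 * r ≤ 9 * r := by gcongr; norm_num
      have l1 : r ≤ 9 * r := by
        calc r = 1 * r := (one_mul r).symm
          _ ≤ 9 * r := by gcongr; norm_num
      calc h _ ≤ h (3 * (3 * (3 * r))) := hh.mono h1
        _ ≤ M * h (3 * (3 * r)) := key _ (by positivity) (e9 ▸ l9) (e9 ▸ l9')
        _ ≤ M * (M * h (3 * r)) := by
            gcongr; exact key _ (by positivity) (l3.trans_lt l9) (l3.trans l9')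
        _ ≤ M * (M * (M * h r)) := by
            gcongr; exact key _ hr (l1.trans_lt l9) (l1.trans l9')
        _ = _ := by ring
  · apply aux_cov_local
    obtain ⟨N, δ₀, hδ₀, H⟩ := hfs (1 / 10) (by norm_num)
    refine ⟨N, 1, δ₀ / 10, by simp, by positivity, fun x r hr hr' => ?_⟩
    have hr1 : 10 * r ≤ δ₀ := by
      rw [mul_comm]; exact (le_div_iff₀ (by norm_num)).1 hr'
    obtain ⟨U, hU1, hU2⟩ := H (Metric.closedBall x (5 * r : ℝ))
      ((aux_ball5 x r).trans (by exact_mod_cast hr1))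
    have hU3 : ∀ i, Metric.ediam (U i) ≤ r := by
      intro i
      have h1 : Metric.ediam (U i) ≤ ((1 / 10 : ℝ≥0) : ℝ≥0∞) * ((10 * r : ℝ≥0) : ℝ≥0∞) :=
        (hU2 i).trans (by gcongr; exact aux_ball5 x r)
      refine h1.trans ?_
      rw [← ENNReal.coe_mul, ← mul_assoc]
      norm_num
    refine ⟨U, hU1, fun i => ⟨(hU3 i).trans ?_, ?_⟩⟩
    · calc (r : ℝ≥0∞) = 1 * r := (one_mul _).symm
        _ ≤ 10 * r := by gcongr; norm_num
    · rw [one_mul]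
      apply hh.mono
      have := ENNReal.toNNReal_mono ENNReal.coe_ne_top (hU3 i)
      rwa [ENNReal.toNNReal_coe] at this
  · refine ⟨1, 2, c₁, by simp, hc₁, fun δ hδ t ht => ?_⟩
    have hft : ∀ r : ℝ≥0, r ≤ δ → h r ≠ ⊤ := fun r hr =>
      ((hh.mono (hr.trans hδ)).trans_lt hc₁f).ne
    obtain ⟨u, hut, hud, hu⟩ := Vitali.exists_disjoint_subfamily_covering_enlargement
      (fun a : Y × ℝ≥0 => Metric.ball a.1 (a.2 : ℝ)) t (fun a => (h a.2).toReal) 2 (by norm_num)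
      (fun a _ => ENNReal.toReal_nonneg) (h δ).toReal
      (fun a ha => ENNReal.toReal_mono (hft δ le_rfl) (hh.mono (ht a ha).2))
      (fun a ha => ⟨a.1, Metric.mem_ball_self (by exact_mod_cast (ht a ha).1)⟩)
    refine ⟨u, hut, hud, ?_⟩
    have hR : ∀ r : ℝ≥0, r ≤ δ → ∃ R : ℝ≥0, R ≤ δ ∧ h R ≤ 2 * h r ∧
        ∀ r', r' ≤ δ → h r' ≤ 2 * h r → r' ≤ R := by
      intro r hr
      have hc : IsCompact (Icc 0 δ ∩ {R | h R ≤ 2 * h r}) :=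
        isCompact_Icc.inter_right (isClosed_le hcont continuous_const)
      obtain ⟨R, hR, hR'⟩ := hc.exists_isGreatest ⟨0, ⟨le_rfl, zero_le⟩, by simp [h0]⟩
      exact ⟨R, hR.1.2, hR.2, fun r' h1 h2 => hR' ⟨⟨zero_le, h1⟩, h2⟩⟩
    choose! R hR1 hR2 hR3 using hR
    have hd : ∀ b ∈ u, Metric.ediam (Metric.closedBall b.1 (R b.2 : ℝ)) ≤ R b.2 := by
      intro b hb
      refine aux_ediam _ _ fun y hy z hz => ?_
      rw [Metric.mem_closedBall] at hy hz
      refine (hum y b.1 z).trans (max_le hy ?_)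
      rwa [dist_comm]
    refine ⟨fun b _ => Metric.closedBall b.1 (R b.2 : ℝ), fun b hb i => ⟨?_, ?_⟩, fun a ha => ?_⟩
    · have hb2 := (ht b (hut hb)).2
      refine (hd b hb).trans ?_
      calc (R b.2 : ℝ≥0∞) ≤ 1 * δ := by rw [one_mul]; exact_mod_cast hR1 _ hb2
        _ ≤ 10 * δ := by gcongr; norm_num
    · have hb2 := (ht b (hut hb)).2
      refine le_trans (hh.mono ?_) (hR2 _ hb2)
      have := ENNReal.toNNReal_mono ENNReal.coe_ne_top (hd b hb)
      rwa [ENNReal.toNNReal_coe] at this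
    · obtain ⟨b, hb, ⟨z, hza, hzb⟩, hab⟩ := hu a ha
      have ha2 := (ht a ha).2
      have hb2 := (ht b (hut hb)).2
      refine ⟨b, hb, 0, ?_⟩
      have h1 : h a.2 ≤ 2 * h b.2 := by
        rw [← ENNReal.toReal_le_toReal (hft _ ha2) (by have := hft _ hb2; finiteness)]
        simpa using hab
      have h2 : (a.2 : ℝ) ≤ R b.2 := by exact_mod_cast hR3 _ hb2 _ ha2 h1
      have h3 : (b.2 : ℝ) ≤ R b.2 := by
        exact_mod_cast hR3 _ hb2 _ hb2 (by rw [two_mul]; exact le_self_add)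
      rw [Metric.mem_ball] at hza hzb
      rw [Metric.mem_closedBall]
      refine (hum a.1 z b.1).trans (max_le ?_ (hzb.le.trans h3))
      rw [dist_comm]
      exact hza.le.trans h2

/-- Points of upper density larger than `c`. -/
def AuxG {Y : Type*} [MetricSpace Y] [MeasurableSpace Y] (ν : Measure Y) (h : ℝ≥0 → ℝ≥0∞)
    (c : ℝ≥0∞) : Set Y :=
  {x | ∀ δ : ℝ≥0, 0 < δ → ∃ r : ℝ≥0, 0 < r ∧ r < δ ∧ c * h r < ν (Metric.ball x r)}

lemma aux_vitali {Y : Type*} [MetricSpace Y] [TopologicalSpace.SeparableSpace Y]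
    [MeasurableSpace Y] [BorelSpace Y] (ν : Measure Y) [IsFiniteMeasure ν] (h : ℝ≥0 → ℝ≥0∞)
    (hcov : AuxCov (Y := Y) h) (c : ℝ≥0∞) (hc0 : c ≠ 0) (hct : c ≠ ⊤) :
    hausdorffM h (AuxG ν h c) < ⊤ := by
  obtain ⟨N, M, δ₀, hM, hδ₀, H⟩ := hcov
  set t : ℕ → Set (Y × ℝ≥0) := fun n =>
    {a | (0 < a.2 ∧ a.2 ≤ min δ₀ (1 / (n + 1))) ∧ c * h a.2 < ν (Metric.ball a.1 a.2)} with ht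
  have H' := fun n : ℕ => H (min δ₀ (1 / (n + 1))) (min_le_left _ _) (t n) (fun a ha => ha.1)
  choose u hut hud U hU1 hU2 using H'
  have hcount : ∀ n, (u n).Countable := fun n =>
    (hud n).countable_of_isOpen (fun a _ => Metric.isOpen_ball)
      (fun a ha => ⟨a.1, Metric.mem_ball_self (by exact_mod_cast (hut n ha).1.1)⟩)
  have : ∀ n, Countable (u n) := fun n => (hcount n).to_subtype
  have h1 : hausdorffM h (AuxG ν h c) = Measure.mkMetric (fun d => h d.toNNReal) (AuxG ν h c) := by
    rw [← OuterMeasure.coe_mkMetric]; rfl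
  rw [h1]
  have h2 := Measure.mkMetric_le_liminf_tsum (β := ℕ) (ι := fun n => u n × Fin N) (AuxG ν h c)
    (l := atTop) (fun n : ℕ => 10 * ((min δ₀ (1 / (n + 1)) : ℝ≥0) : ℝ≥0∞)) ?_
    (fun n p => U n p.1 p.2) (Eventually.of_forall fun n p => (hU1 n p.1 p.1.2 p.2).1)
    (Eventually.of_forall fun n x hx => ?_) (fun d => h d.toNNReal)
  · have hbd : ∀ n, ∑' p : u n × Fin N, h (Metric.ediam (U n p.1 p.2)).toNNReal ≤
        N * (M * (c⁻¹ * ν univ)) := by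
      intro n
      calc ∑' p : u n × Fin N, h (Metric.ediam (U n p.1 p.2)).toNNReal
          ≤ ∑' p : u n × Fin N, M * (c⁻¹ * ν (Metric.ball p.1.1.1 p.1.1.2)) := by
            refine ENNReal.tsum_le_tsum fun p => (hU1 n p.1 p.1.2 p.2).2.trans ?_
            gcongr
            have h3 := (hut n p.1.2).2.le
            rw [mul_comm c⁻¹, ← div_eq_mul_inv, ENNReal.le_div_iff_mul_le (Or.inl hc0) (Or.inl hct),
              mul_comm]
            exact h3
        _ = ∑' (b : u n) (_ : Fin N), M * (c⁻¹ * ν (Metric.ball b.1.1 b.1.2)) :=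
            ENNReal.tsum_prod (f := fun (b : u n) (_ : Fin N) => M * (c⁻¹ * ν (Metric.ball b.1.1 b.1.2)))
        _ = N * (M * (c⁻¹ * ∑' b : u n, ν (Metric.ball b.1.1 b.1.2))) := by
            simp only [tsum_fintype, Finset.sum_const, Finset.card_univ, Fintype.card_fin,
              nsmul_eq_mul, ENNReal.tsum_mul_left]
        _ ≤ N * (M * (c⁻¹ * ν univ)) := by
            gcongr
            exact tsum_measure_le_measure_univ
              (fun b => Metric.isOpen_ball.measurableSet.nullMeasurableSet)
              (fun a b hab => ((hud n) a.2 b.2 (fun hh => hab (Subtype.ext hh))).aedisjoint)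
    refine lt_of_le_of_lt (h2.trans ((liminf_le_liminf (Eventually.of_forall hbd)).trans
      (liminf_const _).le)) ?_
    have := measure_ne_top ν univ
    have : c⁻¹ ≠ ⊤ := ENNReal.inv_ne_top.2 hc0
    exact ENNReal.mul_lt_top (by simp) (ENNReal.mul_lt_top hM.lt_top
      (ENNReal.mul_lt_top this.lt_top (measure_lt_top _ _)))
  · have h3 : Tendsto (fun n : ℕ => min δ₀ (1 / (n + 1) : ℝ≥0)) atTop (𝓝 0) :=
      tendsto_of_tendsto_of_tendsto_of_le_of_le tendsto_const_nhds
        (tendsto_one_div_add_atTop_nhds_zero_nat (𝕜 := ℝ≥0)) (fun n => zero_le)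
        (fun n => min_le_right _ _)
    have h4 := ENNReal.Tendsto.const_mul (a := 10) (ENNReal.tendsto_coe.2 h3) (Or.inr (by simp))
    simpa using h4
  · obtain ⟨r, hr0, hr1, hr2⟩ := hx (min δ₀ (1 / (n + 1))) (by positivity)
    obtain ⟨b, hb, i, hi⟩ := hU2 n (x, r) ⟨⟨hr0, hr1.le⟩, hr2⟩
    exact mem_iUnion.2 ⟨(⟨b, hb⟩, i), hi⟩

lemma aux_G_meas {Y : Type*} [MetricSpace Y]
    [MeasurableSpace Y] [BorelSpace Y] (ν : Measure Y) (t : ℝ≥0∞) (r : ℝ) :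
    IsOpen {x | t < ν (Metric.ball x r)} := by
  rw [Metric.isOpen_iff]
  intro x hx
  have hmono : Monotone (fun n : ℕ => Metric.ball x (r - 1 / (n + 1 : ℝ))) := by
    intro i j hij
    apply Metric.ball_subset_ball
    gcongr
  have hun : ⋃ n : ℕ, Metric.ball x (r - 1 / (n + 1 : ℝ)) = Metric.ball x r := by
    ext y
    simp only [mem_iUnion, Metric.mem_ball]
    constructor
    · rintro ⟨n, hn⟩
      have : 0 < 1 / (n + 1 : ℝ) := by positivity
      linarith
    · intro hy
      obtain ⟨n, hn⟩ := exists_nat_one_div_lt (sub_pos.2 hy)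
      exact ⟨n, by linarith⟩
  have ht := tendsto_measure_iUnion_atTop (μ := ν) hmono
  rw [hun] at ht
  obtain ⟨n, hn⟩ := (ht.eventually (lt_mem_nhds hx)).exists
  refine ⟨1 / (n + 1), by positivity, fun y hy => ?_⟩
  refine lt_of_lt_of_le hn (measure_mono ?_)
  apply Metric.ball_subset_ball'
  rw [Metric.mem_ball, dist_comm] at hy
  linarith

lemma aux_GG {Y : Type*} [MetricSpace Y]
    [MeasurableSpace Y] [BorelSpace Y] (ν : Measure Y) (h : ℝ≥0 → ℝ≥0∞) (c : ℝ≥0∞) (δ : ℝ≥0) :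
    IsOpen {x | ∃ r : ℝ≥0, 0 < r ∧ r < δ ∧ c * h r < ν (Metric.ball x r)} := by
  have : {x | ∃ r : ℝ≥0, 0 < r ∧ r < δ ∧ c * h r < ν (Metric.ball x r)} =
      ⋃ (r : ℝ≥0) (_ : 0 < r ∧ r < δ), {x | c * h r < ν (Metric.ball x r)} := by
    ext x; simp [and_assoc]
  rw [this]
  exact isOpen_biUnion fun r _ => aux_G_meas ν _ _

lemma aux_G_eq {Y : Type*} [MetricSpace Y]
    [MeasurableSpace Y] (ν : Measure Y) (h : ℝ≥0 → ℝ≥0∞) (c : ℝ≥0∞) :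
    AuxG ν h c = ⋂ n : ℕ, {x | ∃ r : ℝ≥0, 0 < r ∧ r < (1 / (n + 1) : ℝ≥0) ∧
      c * h r < ν (Metric.ball x r)} := by
  ext x
  simp only [AuxG, mem_setOf_eq, mem_iInter]
  constructor
  · intro H n
    exact H _ (by positivity)
  · intro H δ hδ
    obtain ⟨n, hn⟩ := ((tendsto_one_div_add_atTop_nhds_zero_nat (𝕜 := ℝ≥0)).eventually
      (ge_mem_nhds hδ)).exists
    obtain ⟨r, h1, h2, h3⟩ := H n
    exact ⟨r, h1, h2.trans_le hn, h3⟩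

lemma aux_analytic_eps {Y : Type*} [MetricSpace Y]
    [MeasurableSpace Y] [BorelSpace Y] (ν : Measure Y) [IsFiniteMeasure ν]
    (g : (ℕ → ℕ) → Y) (hg : Continuous g) (ε : ℝ≥0∞) (hε : ε ≠ 0) :
    ∃ C ⊆ range g, IsCompact C ∧ ν (range g) ≤ ν C + ε := by
  obtain ⟨e, he0, hes⟩ := ENNReal.exists_pos_sum_of_countable' (ε := ε / 2) (by simpa using hε) ℕ
  have step : ∀ (k : ℕ) (T : Set (ℕ → ℕ)), ∃ m : ℕ,
      ν (g '' T) ≤ ν (g '' (T ∩ {x | x k ≤ m})) + e k := by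
    intro k T
    have hmono : Monotone (fun m : ℕ => g '' (T ∩ {x | x k ≤ m})) := by
      intro i j hij
      apply image_mono
      apply inter_subset_inter_right
      intro x (hx : x k ≤ i)
      exact hx.trans hij
    have hun : ⋃ m : ℕ, g '' (T ∩ {x | x k ≤ m}) = g '' T := by
      rw [← image_iUnion, ← inter_iUnion]
      congr 1
      apply inter_eq_left.2
      intro x _
      exact mem_iUnion.2 ⟨x k, by simp⟩
    have ht := tendsto_measure_iUnion_atTop (μ := ν) hmono
    rw [hun] at ht
    have ht' := ht.add_const (e k)
    have := ht'.eventually (lt_mem_nhds (ENNReal.lt_add_right (measure_ne_top ν (g '' T)) (he0 k).ne'))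
    obtain ⟨m, hm⟩ := this.exists
    exact ⟨m, hm.le⟩
  choose m hm using step
  obtain ⟨T, hT0, hTs⟩ : ∃ T : ℕ → Set (ℕ → ℕ), T 0 = univ ∧
      ∀ k, T (k + 1) = T k ∩ {x | x k ≤ m k (T k)} :=
    ⟨fun n => Nat.rec univ (fun k S => S ∩ {x | x k ≤ m k S}) n, rfl, fun k => rfl⟩
  set b : ℕ → ℕ := fun k => m k (T k) with hb
  have hTmem : ∀ k, T k = {x | ∀ i < k, x i ≤ b i} := by
    intro k
    induction k with
    | zero => simp [hT0]
    | succ k ih =>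
      rw [hTs]
      ext x
      have : (x ∈ T k) ↔ ∀ i < k, x i ≤ b i := by rw [ih]; rfl
      simp only [mem_inter_iff, mem_setOf_eq, this, Nat.forall_lt_succ_right]
      rfl
  have hsum : ∀ k, ν (range g) ≤ ν (g '' T k) + ∑ i ∈ Finset.range k, e i := by
    intro k
    induction k with
    | zero => simp [hT0]
    | succ k ih =>
      refine ih.trans ?_
      rw [Finset.sum_range_succ, hTs]
      calc _ ≤ (ν (g '' (T k ∩ {x | x k ≤ m k (T k)})) + e k) + ∑ i ∈ Finset.range k, e i := by
            gcongr; exact hm k (T k)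
        _ = _ := by ring
  have hsum' : ∀ k, ν (range g) ≤ ν (g '' T k) + ε / 2 := fun k =>
    (hsum k).trans (by gcongr; exact (ENNReal.sum_le_tsum _).trans hes.le)
  set Kc : Set (ℕ → ℕ) := Set.pi univ fun i => Iic (b i) with hKc
  have hKcc : IsCompact Kc := isCompact_univ_pi fun i => (finite_Iic (b i)).isCompact
  refine ⟨g '' Kc, image_subset_range _ _, hKcc.image hg, ?_⟩
  obtain ⟨U, hCU, hUo, hU⟩ := (g '' Kc).exists_isOpen_lt_add (μ := ν) (measure_ne_top ν _)
    (ε := ε / 2) (by simpa using hε)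
  have hk : ∃ k, T k ⊆ g ⁻¹' U := by
    letI := PiNat.metricSpaceNatNat
    obtain ⟨δ, hδ, hδU⟩ := hKcc.exists_thickening_subset_open (hUo.preimage hg)
      (image_subset_iff.1 hCU)
    obtain ⟨k, hk⟩ := exists_pow_lt_of_lt_one hδ (by norm_num : (1 / 2 : ℝ) < 1)
    refine ⟨k, fun x hx => hδU ?_⟩
    rw [Metric.mem_thickening_iff]
    refine ⟨fun i => min (x i) (b i), fun i _ => Set.mem_Iic.2 (min_le_right _ _), lt_of_le_of_lt ?_ hk⟩
    rw [← PiNat.mem_cylinder_iff_dist_le]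
    intro i hi
    rw [hTmem] at hx
    exact (min_eq_left (hx i hi)).symm
  obtain ⟨k, hk⟩ := hk
  calc ν (range g) ≤ ν (g '' T k) + ε / 2 := hsum' k
    _ ≤ ν U + ε / 2 := by gcongr; exact image_subset_iff.2 hk
    _ ≤ ν (g '' Kc) + ε / 2 + ε / 2 := by gcongr
    _ = _ := by rw [add_assoc, ENNReal.add_halves]

lemma aux_analytic {Y : Type*} [MetricSpace Y]
    [MeasurableSpace Y] [BorelSpace Y] (ν : Measure Y) [IsFiniteMeasure ν]
    (A : Set Y) (hA : AnalyticSet A) :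
    ∃ B ⊆ A, MeasurableSet B ∧ ν (A \ B) = 0 := by
  rw [AnalyticSet] at hA
  rcases hA with rfl | ⟨g, hg, rfl⟩
  · exact ⟨∅, subset_rfl, MeasurableSet.empty, by simp⟩
  have := fun n : ℕ => aux_analytic_eps ν g hg ((n : ℝ≥0∞)⁻¹) (by simp)
  choose C hCs hCc hC using this
  have hBm : MeasurableSet (⋃ n, C n) :=
    MeasurableSet.iUnion fun n => (hCc n).isClosed.measurableSet
  refine ⟨⋃ n, C n, iUnion_subset hCs, hBm, ?_⟩
  rw [measure_sdiff (iUnion_subset hCs) hBm.nullMeasurableSet (measure_ne_top _ _)]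
  rw [tsub_eq_zero_iff_le]
  have h1 : ∀ n : ℕ, ν (range g) ≤ ν (⋃ n, C n) + (n : ℝ≥0∞)⁻¹ := fun n =>
    (hC n).trans (by gcongr; exact subset_iUnion C n)
  have h2 : Tendsto (fun n : ℕ => ν (⋃ n, C n) + (n : ℝ≥0∞)⁻¹) atTop (𝓝 (ν (⋃ n, C n) + 0)) :=
    ENNReal.tendsto_inv_nat_nhds_zero.const_add _
  rw [add_zero] at h2
  exact ge_of_tendsto' h2 h1


lemma aux_W {Y : Type*} [MetricSpace Y] [CompleteSpace Y]
    [TopologicalSpace.SeparableSpace Y] [MeasurableSpace Y] [BorelSpace Y] (ν : Measure Y)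
    [IsFiniteMeasure ν] (h : ℝ≥0 → ℝ≥0∞) (hh : IsHausdorffFunction h) (hcont : Continuous h)
    (h0 : h 0 = 0) (W : Set Y) (hWm : MeasurableSet W)
    (hW : ∀ x ∈ W, ∀ n : ℕ, x ∉ AuxG ν h ((2 ^ n)⁻¹))
    (hN : ∀ L ⊆ W, ν L = 0 → hausdorffM h L = 0) : ν W = 0 := by
  by_contra hW0
  haveI : SecondCountableTopology Y := UniformSpace.secondCountable_of_separable Y
  obtain ⟨e, he0, hes⟩ := ENNReal.exists_pos_sum_of_countable' hW0 ℕ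
  set V : ℕ → ℕ → Set Y := fun n m => {x | ∃ r : ℝ≥0, 0 < r ∧ r < (1 / (m + 1) : ℝ≥0) ∧
      (2 ^ n : ℝ≥0∞)⁻¹ * h r < ν (Metric.ball x r)} with hV
  have hVo : ∀ n m, IsOpen (V n m) := fun n m => aux_GG ν h _ _
  have hstep : ∀ n, ∃ m, ν (W ∩ V n m) < e n := by
    intro n
    have hanti : Antitone (fun m => W ∩ V n m) := by
      intro i j hij
      apply inter_subset_inter_right
      rintro x ⟨r, hr, hr1, hr2⟩
      refine ⟨r, hr, hr1.trans_le ?_, hr2⟩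
      apply one_div_le_one_div_of_le (by positivity)
      gcongr
    have hemp : ⋂ m, (W ∩ V n m) = ∅ := by
      rw [eq_empty_iff_forall_notMem]
      intro x hx
      rw [mem_iInter] at hx
      apply hW x (hx 0).1 n
      rw [aux_G_eq, mem_iInter]
      exact fun m => (hx m).2
    have ht := tendsto_measure_iInter_atTop (μ := ν)
      (fun m => (hWm.inter (hVo n m).measurableSet).nullMeasurableSet) hanti
      ⟨0, measure_ne_top _ _⟩
    rw [hemp, measure_empty] at ht
    exact (ht.eventually (gt_mem_nhds (he0 n))).exists
  choose m hm using hstep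
  set W0 := W \ ⋃ n, V n (m n) with hW0d
  have hW0m : MeasurableSet W0 :=
    hWm.diff (MeasurableSet.iUnion fun n => (hVo n _).measurableSet)
  have hW0pos : 0 < ν W0 := by
    rw [pos_iff_ne_zero]
    intro h00
    have : ν W ≤ ν W0 + ∑' n, ν (W ∩ V n (m n)) := by
      refine le_trans ?_ (add_le_add_right (measure_iUnion_le _) _)
      refine le_trans (measure_mono ?_) (measure_union_le _ _)
      rw [← inter_iUnion, hW0d, diff_union_inter]
    rw [h00, zero_add] at this
    exact absurd ((this.trans (ENNReal.tsum_le_tsum fun n => (hm n).le)).trans_lt hes)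
      (lt_irrefl _)
  obtain ⟨K, hKW, hKc, hK0⟩ := hW0m.exists_lt_isCompact_of_ne_top (measure_ne_top ν _) hW0pos
  have hcore := aux_core (ν.restrict K) h hh hcont h0 K hKc
    (by rw [Measure.restrict_apply_self]; exact hK0.ne') ?_
  · obtain ⟨L, hLK, hLc, hL0, hL⟩ := hcore
    rw [Measure.restrict_apply hLc.isClosed.measurableSet, inter_eq_left.2 hLK] at hL0
    exact hL (hN L (hLK.trans (hKW.trans diff_subset)) hL0)
  · intro n
    refine ⟨1 / (m n + 1) / 2, by positivity, fun U d hU hd => ?_⟩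
    have hdlt : d < (1 / (m n + 1) : ℝ≥0) := hd.trans_lt (NNReal.half_lt_self (by positivity))
    have key : ν (U ∩ K) ≤ (2 ^ n : ℝ≥0∞)⁻¹ * h d := by
      rcases (U ∩ K).eq_empty_or_nonempty with hemp | ⟨x, hxU, hxK⟩
      · simp [hemp]
      have hev : ∀ᶠ r in 𝓝[>] d, ν (U ∩ K) ≤ (2 ^ n : ℝ≥0∞)⁻¹ * h r := by
        filter_upwards [Ioo_mem_nhdsGT hdlt] with r hr
        have hx : x ∉ V n (m n) := fun hx => (hKW hxK).2 (mem_iUnion.2 ⟨n, hx⟩)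
        have hle : ν (Metric.ball x r) ≤ (2 ^ n : ℝ≥0∞)⁻¹ * h r := by
          by_contra hlt
          exact hx ⟨r, (zero_le).trans_lt hr.1, hr.2, not_le.1 hlt⟩
        refine (measure_mono ?_).trans hle
        rintro y ⟨hy, -⟩
        rw [Metric.mem_ball]
        have h1 : edist y x ≤ d := (Metric.edist_le_ediam_of_mem hy hxU).trans hU
        rw [edist_nndist] at h1
        have h2 : nndist y x ≤ d := by exact_mod_cast h1
        have h3 : nndist y x < r := h2.trans_lt hr.1
        exact_mod_cast h3
      have hc : Tendsto (fun r => (2 ^ n : ℝ≥0∞)⁻¹ * h r) (𝓝[>] d)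
          (𝓝 ((2 ^ n : ℝ≥0∞)⁻¹ * h d)) :=
        ENNReal.Tendsto.const_mul ((hcont.tendsto d).mono_left nhdsWithin_le_nhds)
          (Or.inr (by simp))
      haveI : (𝓝[>] d).NeBot := nhdsGT_neBot d
      exact ge_of_tendsto hc hev
    have hKU : (ν.restrict K) U = ν (U ∩ K) :=
      Measure.restrict_apply' hKc.isClosed.measurableSet
    rw [hKU]
    calc (2 : ℝ≥0∞) ^ n * ν (U ∩ K) ≤ 2 ^ n * ((2 ^ n : ℝ≥0∞)⁻¹ * h d) := by gcongr
      _ = h d := by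
        rw [← mul_assoc, ENNReal.mul_inv_cancel (by simp) (by simp), one_mul]

lemma aux_null_car {Z : Type*} (μ : OuterMeasure Z) (s : Set Z) (hs : μ s = 0) :
    μ.IsCaratheodory s := by
  rw [OuterMeasure.isCaratheodory_iff_le']
  intro t
  have h1 : μ (t ∩ s) = 0 := le_antisymm ((μ.mono inter_subset_right).trans hs.le) (zero_le)
  rw [h1, zero_add]
  exact μ.mono diff_subset

lemma aux_borel_car {Y : Type*} [MetricSpace Y] [MeasurableSpace Y] [BorelSpace Y]
    (h : ℝ≥0 → ℝ≥0∞) (s : Set Y) (hs : MeasurableSet s) :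
    (hausdorffM h).IsCaratheodory s := by
  have hm : (hausdorffM (Z := Y) h).IsMetric := OuterMeasure.mkMetric'_isMetric _
  exact hm.le_caratheodory s hs

lemma aux_range {X : Type*} [TopologicalSpace X]
    (hXan : MeasureTheory.AnalyticSet (Set.univ : Set X))
    {Y : Type*} [MetricSpace Y] [TopologicalSpace.SeparableSpace Y]
    (f : X → Y)
    (hfBorel : ∀ O : Set Y, IsOpen O → MeasurableSet[borel X] (f ⁻¹' O)) :
    AnalyticSet (range f) := by
  haveI : SecondCountableTopology Y := UniformSpace.secondCountable_of_separable Y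
  rw [AnalyticSet] at hXan
  rcases hXan with h | ⟨g, hg, hgr⟩
  · have : range f = ∅ := by
      rw [← image_univ, h, image_empty]
    rw [this]
    exact analyticSet_empty
  · borelize X
    borelize Y
    have hfm : Measurable f := measurable_of_isOpen hfBorel
    have hgm : Measurable g := hg.measurable
    have : range f = (f ∘ g) '' univ := by
      rw [image_univ, range_comp, hgr, image_univ]
    rw [this]
    exact MeasurableSet.univ.analyticSet_image (hfm.comp hgm)

/-- Theorem `Rigidity`. -/
theorem statement_19 {X : Type*} [TopologicalSpace X] [T2Space X]
    (hXan : MeasureTheory.AnalyticSet (Set.univ : Set X))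
    (μ : MeasureTheory.OuterMeasure X)
    (hBorel : ∀ B : Set X, MeasurableSet[borel X] B → μ.IsCaratheodory B)
    (hfin : μ Set.univ < ⊤)
    {Y : Type*} [MetricSpace Y] [CompleteSpace Y] [TopologicalSpace.SeparableSpace Y]
    (h : ℝ≥0 → ℝ≥0∞) (hh : IsHausdorffFunction h) (hcont : Continuous h) (h0 : h 0 = 0)
    (halt : FiniteOrder h ∨ FiniteStructuralDim Y ∨
      ∀ x y z : Y, dist x z ≤ max (dist x y) (dist y z))
    (f : X → Y)
    (hfBorel : ∀ O : Set Y, IsOpen O → MeasurableSet[borel X] (f ⁻¹' O))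
    (hLuzinN : ∀ N : Set X, μ N = 0 → hausdorffM h (f '' N) = 0) :
    SigmaFiniteSet (hausdorffM h) (Set.range f) := by
  borelize Y
  have hA := aux_range hXan f hfBorel
  have hpre : ∀ B : Set Y, MeasurableSet B → MeasurableSet[borel X] (f ⁻¹' B) := by
    intro B hB
    have hfm : @Measurable X Y (borel X) _ f :=
      @measurable_of_isOpen _ _ _ _ _ (borel X) f hfBorel
    exact hfm hB
  have hle : (inferInstance : MeasurableSpace Y) ≤ (OuterMeasure.map f μ).caratheodory := by
    intro B hB
    rw [OuterMeasure.isCaratheodory_iff]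
    intro t
    simp only [OuterMeasure.map_apply, preimage_inter, preimage_diff]
    exact hBorel _ (hpre B hB) _
  set ν : Measure Y := (OuterMeasure.map f μ).toMeasure hle with hν
  have hνa : ∀ B, MeasurableSet B → ν B = μ (f ⁻¹' B) := by
    intro B hB
    rw [hν, toMeasure_apply _ _ hB, OuterMeasure.map_apply]
  haveI : IsFiniteMeasure ν := ⟨by rw [hνa _ MeasurableSet.univ]; simpa using hfin⟩
  have hN : ∀ E ⊆ range f, ν E = 0 → hausdorffM h E = 0 := by
    intro E hE hE0
    have h1 : μ (f ⁻¹' (toMeasurable ν E)) = 0 := by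
      rw [← hνa _ (measurableSet_toMeasurable _ _), measure_toMeasurable, hE0]
    refine le_antisymm (((hausdorffM h).mono ?_).trans (hLuzinN _ h1).le) (zero_le)
    intro y hy
    obtain ⟨x, rfl⟩ := hE hy
    exact ⟨x, subset_toMeasurable ν E hy, rfl⟩
  obtain ⟨B, hBA, hBm, hB0⟩ := aux_analytic ν (range f) hA
  have hGm : ∀ n : ℕ, MeasurableSet (AuxG ν h ((2 ^ n)⁻¹)) := by
    intro n
    rw [aux_G_eq]
    exact MeasurableSet.iInter fun k => (aux_GG ν h _ _).measurableSet
  set W := B \ ⋃ n : ℕ, AuxG ν h ((2 ^ n)⁻¹) with hWd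
  have hWm : MeasurableSet W := hBm.diff (MeasurableSet.iUnion hGm)
  have hW0 : ν W = 0 := by
    refine aux_W ν h hh hcont h0 W hWm (fun x hx n hxn => hx.2 (mem_iUnion.2 ⟨n, hxn⟩)) ?_
    exact fun L hL => hN L (hL.trans (diff_subset.trans hBA))
  have hnull : hausdorffM h ((range f \ B) ∪ W) = 0 := by
    refine hN _ (union_subset diff_subset (diff_subset.trans hBA)) ?_
    exact measure_union_null hB0 hW0
  have hcov := aux_cov h hh hcont h0 halt
  refine ⟨fun n => Nat.casesOn n ((range f \ B) ∪ W) fun k => B ∩ AuxG ν h ((2 ^ k)⁻¹), ?_, ?_⟩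
  · rintro (_ | k)
    · exact ⟨aux_null_car _ _ hnull, hnull.trans_lt ENNReal.zero_lt_top⟩
    · refine ⟨aux_borel_car h _ (hBm.inter (hGm k)), ?_⟩
      exact ((hausdorffM h).mono inter_subset_right).trans_lt
        (aux_vitali ν h hcov _ (by simp) (by simp))
  · apply Subset.antisymm
    · intro y hy
      rw [mem_iUnion]
      by_cases hyB : y ∈ B
      · by_cases hyG : y ∈ ⋃ n : ℕ, AuxG ν h ((2 ^ n)⁻¹)
        · obtain ⟨k, hk⟩ := mem_iUnion.1 hyG
          exact ⟨k + 1, hyB, hk⟩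
        · exact ⟨0, Or.inr ⟨hyB, hyG⟩⟩
      · exact ⟨0, Or.inl ⟨hy, hyB⟩⟩
    · apply iUnion_subset
      rintro (_ | k)
      · exact union_subset diff_subset (diff_subset.trans hBA)
      · exact inter_subset_left.trans hBA
end
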